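/- arXiv:2311.03981 — 4 statements merged into one kernel-verified Lean document; each statement's English description precedes it below -/
import Mathlib

section
/- Let V be an n-dimensional vector space over F_q or ℂ and w ∈ GL(V) ∗ F_r a reduced word of length l ≥ 2. Then the diameter of the word image w(SL(V)^r) in the projective rank seminorm satisfies diam(w(SL(V)^r)) ≥ ‖w‖_crit / l − 1. -/
/-- The projective rank seminorm on `GL(V)`. -/
noncomputable def projNorm {K V : Type*} [Field K] [AddCommGroup V] [Module K V]
    (g : (Module.End K V)ˣ) : ℕ :=
  sInf {m | ∃ μ : Kˣ,
    Module.finrank K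
      (LinearMap.range ((g : Module.End K V) - (μ : K) • (1 : Module.End K V))) = m}

/-- The diameter of `GL(V)` in the projective rank seminorm. -/
noncomputable def projDiamGL (K V : Type*) [Field K] [AddCommGroup V] [Module K V] : ℕ :=
  sSup {m | ∃ g : (Module.End K V)ˣ, projNorm g = m}

/-- Evaluation of the word `w = c₀ x_{ι(1)}^{ε(1)} c₁ ⋯ x_{ι(l)}^{ε(l)} c_l` at a tuple `h`. -/
def wordEval {G : Type*} [Group G] {l r : ℕ} (c : Fin (l + 1) → G) (ι : Fin l → Fin r)
    (ε : Fin l → ℤ) (h : Fin r → G) : G :=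
  c 0 * (List.ofFn (fun j : Fin l => (h (ι j)) ^ (ε j) * c j.succ)).prod

/-- The critical length `‖w‖_crit = min {diam GL(V), ‖c_j‖ : j critical}`. -/
noncomputable def critLength {K V : Type*} [Field K] [AddCommGroup V] [Module K V]
    {l r : ℕ} (c : Fin (l + 1) → (Module.End K V)ˣ) (ι : Fin l → Fin r) (ε : Fin l → ℤ) : ℕ :=
  sInf (insert (projDiamGL K V)
    {m | ∃ j : ℕ, ∃ hj : j + 1 < l,
      ι ⟨j, by omega⟩ = ι ⟨j + 1, hj⟩ ∧ ε ⟨j, by omega⟩ = -ε ⟨j + 1, hj⟩ ∧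
      projNorm (c ⟨j + 1, by omega⟩) = m})

/-!
Fix `g` in `GL(V)` and construct `h` in `SL(V)^r` together with vectors `x j` such that
`y j := g⁻¹ * w(h) • x j` lies outside the span of `x j` and all earlier `x i` and `y i`. Then the
vectors `y j - μ • x j` are linearly independent for every scalar `μ`, so `g⁻¹ * w(h)` is at least
as far from the scalars as there are vectors.

Each `x j` is sent through the word from right to left, one letter at a time, and each letter costs
one more prescribed value of one `h i`, hence `l` values per vector. A value can be chosen freely
outside the subspace where the inverse of the letter is already prescribed, but the next letter
must not be prescribed at the resulting vector. The only difficult case is a letter followed by its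
inverse: the chosen value `y` then joins the vectors at which the next letter is prescribed, so the
constant `c` in between has to satisfy `c • y ∉ R ⊔ ⟨y⟩`, and such a `y ∉ R` exists because the
projective rank of `c` exceeds `dim R`.
-/

open Module Submodule

section LinearAlgebra

variable {K V : Type*} [Field K] [AddCommGroup V] [Module K V]

theorem comap_units_ne_top {Q : Submodule K V} (hQ : Q ≠ ⊤) (g : (Module.End K V)ˣ) :
    Q.comap (g : Module.End K V) ≠ ⊤ :=
  (comap_injective_of_surjective (MulAction.surjective g)).ne hQ

theorem exists_notMem_and_smul_notMem {P Q : Submodule K V} (hP : P ≠ ⊤) (hQ : Q ≠ ⊤)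
    (g : (Module.End K V)ˣ) : ∃ y ∉ P, g • y ∉ Q := by
  by_contra! hcover
  have hunion : ((⊤ : Submodule K V) : Set V) ⊆ P ∪ Q.comap (g : Module.End K V) :=
    fun y _ ↦ or_iff_not_imp_left.2 (hcover y)
  rcases AddSubgroupClass.subset_union.1 hunion with h | h
  exacts [hP (top_le_iff.1 h), comap_units_ne_top hQ g (top_le_iff.1 h)]

theorem mem_sup_span_singleton_exchange {T : Submodule K V} {x y : V}
    (hxy : x ∈ T ⊔ span K {y}) (hx : x ∉ T) : y ∈ T ⊔ span K {x} := by
  have h := mem_span_insert_exchange (K := K) (s := (T : Set V)) (x := x) (y := y)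
  simp only [span_insert, span_eq, sup_comm (span K _)] at h
  exact h hxy hx

theorem exists_smul_eq_of_notMem_sup_span {T : Submodule K V} {x y : V}
    (hx : x ∉ T) (hy : y ∉ T ⊔ span K {x}) :
    ∃ g : (Module.End K V)ˣ, LinearMap.det (g : Module.End K V) = 1 ∧
      (∀ t ∈ T, g • t = t) ∧ g • x = y := by
  have hx' : x ∉ T ⊔ span K {y - x} := fun h ↦ hy (by
    have := add_mem (mem_sup_span_singleton_exchange h hx)
      (mem_sup_right (mem_span_singleton_self x))
    rwa [sub_add_cancel] at this)
  obtain ⟨f, hfx, hf⟩ := exists_le_ker_of_notMem hx'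
  have hfT : ∀ t ∈ T, f t = 0 := fun t ht ↦ hf (mem_sup_left ht)
  have hfyx : ((f x)⁻¹ • f) (y - x) = 0 := by
    rw [LinearMap.smul_apply, hf (mem_sup_right (mem_span_singleton_self _)), smul_zero]
  refine ⟨(LinearMap.GeneralLinearGroup.generalLinearEquiv K V).symm
    (LinearEquiv.transvection hfyx), ?_, fun t ht ↦ ?_, ?_⟩
  · exact (LinearEquiv.coe_det _).symm.trans
      (congrArg Units.val (LinearEquiv.transvection.det_eq_one hfyx))
  · change t + ((f x)⁻¹ • f) t • (y - x) = t
    simp [hfT t ht]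
  · change x + ((f x)⁻¹ • f) x • (y - x) = y
    simp [hfx]

theorem finrank_sup_span_singleton_le [FiniteDimensional K V] (R : Submodule K V) (y : V) :
    finrank K ↥(R ⊔ span K {y}) ≤ finrank K R + 1 := by
  by_cases hy : y ∈ R
  · rw [sup_eq_left.2 ((span_singleton_le_iff_mem y R).2 hy)]
    exact Nat.le_succ _
  · exact (finrank_sup_span_singleton hy).le

theorem exists_notMem_of_finrank_lt {R : Submodule K V} (h : finrank K R < finrank K V) :
    ∃ y, y ∉ R :=
  SetLike.exists_not_mem_of_ne_top R (lt_top_of_finrank_lt_finrank h).ne rfl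

theorem exists_notMem_sup_span_singleton [FiniteDimensional K V] {R : Submodule K V}
    (h : finrank K R + 1 < finrank K V) (y : V) : ∃ z, z ∉ R ⊔ span K {y} :=
  exists_notMem_of_finrank_lt ((finrank_sup_span_singleton_le R y).trans_lt h)

theorem exists_smul_eq_of_notMem [FiniteDimensional K V] {T : Submodule K V}
    (hT : finrank K T + 1 < finrank K V) {x y : V} (hx : x ∉ T) (hy : y ∉ T) :
    ∃ g : (Module.End K V)ˣ, LinearMap.det (g : Module.End K V) = 1 ∧
      (∀ t ∈ T, g • t = t) ∧ g • x = y := by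
  by_cases hyx : y ∈ T ⊔ span K {x}
  · obtain ⟨z, hz⟩ := exists_notMem_sup_span_singleton hT x
    have hzT : z ∉ T := fun h ↦ hz (mem_sup_left h)
    have hyz : y ∉ T ⊔ span K {z} := fun h ↦ hz <|
      sup_le le_sup_left ((span_singleton_le_iff_mem _ _).2 hyx)
        (mem_sup_span_singleton_exchange h hy)
    obtain ⟨g, hg, hgT, hgx⟩ := exists_smul_eq_of_notMem_sup_span hx hz
    obtain ⟨g', hg', hgT', hgz⟩ := exists_smul_eq_of_notMem_sup_span hzT hyz
    exact ⟨g' * g, by simp [hg, hg'], fun t ht ↦ by rw [mul_smul, hgT t ht, hgT' t ht],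
      by rw [mul_smul, hgx, hgz]⟩
  · exact exists_smul_eq_of_notMem_sup_span hx hyx

theorem exists_det_eq_and_smul_eq [FiniteDimensional K V] {T : Submodule K V}
    (hT : finrank K T + 1 < finrank K V) (g : (Module.End K V)ˣ) {x y : V}
    (hx : x ∉ T) (hy : y ∉ T.map (g : Module.End K V)) :
    ∃ g' : (Module.End K V)ˣ,
      LinearMap.det (g' : Module.End K V) = LinearMap.det (g : Module.End K V) ∧
      (∀ t ∈ T, g' • t = g • t) ∧ g' • x = y := by
  have hy' : g⁻¹ • y ∉ T := fun h ↦ hy ⟨g⁻¹ • y, h, smul_inv_smul g y⟩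
  obtain ⟨f, hf, hfT, hfx⟩ := exists_smul_eq_of_notMem hT hx hy'
  exact ⟨g * f, by simp [hf], fun t ht ↦ by rw [mul_smul, hfT t ht],
    by rw [mul_smul, hfx, smul_inv_smul]⟩

theorem exists_forall_sub_smul_mem [FiniteDimensional K V] {R : Submodule K V}
    (hR : finrank K R + 1 < finrank K V) {f : Module.End K V}
    (hf : ∀ y ∉ R, f y ∈ R ⊔ span K {y}) : ∃ a : K, ∀ v, f v - a • v ∈ R := by
  have hfR : R ≤ R.comap f := by
    intro t ht
    by_contra hft
    obtain ⟨y, hy⟩ := exists_notMem_sup_span_singleton hR (f t)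
    have hyR : y ∉ R := fun h ↦ hy (mem_sup_left h)
    have hsup : R ⊔ span K {y + t} ≤ R ⊔ span K {y} :=
      sup_le le_sup_left ((span_singleton_le_iff_mem _ _).2
        (add_mem (mem_sup_right (mem_span_singleton_self y)) (mem_sup_left ht)))
    have hfyt := hsup (hf (y + t) fun h ↦ hyR ((R.add_mem_iff_left ht).1 h))
    rw [map_add, Submodule.add_mem_iff_right _ (hf y hyR)] at hfyt
    exact hy (mem_sup_span_singleton_exchange hfyt hft)
  have hdep : ∀ v, ¬ LinearIndependent K ![v, R.mapQ R f hfR v] := by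
    intro v
    obtain ⟨y, rfl⟩ := R.mkQ_surjective v
    by_cases hy : y ∈ R
    · exact fun h ↦ h.ne_zero 0 (by simpa using hy)
    obtain ⟨t, ht, w, hw, hsum⟩ := mem_sup.1 (hf y hy)
    obtain ⟨a, rfl⟩ := mem_span_singleton.1 hw
    rw [LinearIndependent.pair_iff]
    push Not
    refine ⟨a, -1, ?_, by simp⟩
    have hquot : R.mkQ (f y) = a • R.mkQ y := by
      rw [← hsum, map_add, map_smul, mkQ_apply, (Quotient.mk_eq_zero R).2 ht, zero_add]
    change a • R.mkQ y + (-1 : K) • R.mkQ (f y) = 0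
    rw [hquot, neg_one_smul, add_neg_cancel]
  obtain ⟨a, ha⟩ := LinearMap.exists_eq_smul_id_of_forall_notLinearIndependent hdep
  refine ⟨a, fun v ↦ (Submodule.Quotient.eq R).1 ?_⟩
  exact LinearMap.congr_fun ha (R.mkQ v)

theorem projNorm_le_finrank_range (g : (Module.End K V)ˣ) (μ : Kˣ) :
    projNorm g ≤
      finrank K (LinearMap.range ((g : Module.End K V) - (μ : K) • (1 : Module.End K V))) :=
  Nat.sInf_le ⟨μ, rfl⟩

theorem le_projNorm_iff {g : (Module.End K V)ˣ} {m : ℕ} :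
    m ≤ projNorm g ↔ ∀ μ : Kˣ, m ≤
      finrank K (LinearMap.range ((g : Module.End K V) - (μ : K) • (1 : Module.End K V))) :=
  ⟨fun h μ ↦ h.trans (projNorm_le_finrank_range g μ), fun h ↦
    le_csInf ⟨_, 1, rfl⟩ (by rintro _ ⟨μ, rfl⟩; exact h μ)⟩

theorem le_projNorm_of_linearIndependent [FiniteDimensional K V] {f : (Module.End K V)ˣ} {k : ℕ}
    {x : Fin k → V} (hx : ∀ μ : Kˣ, LinearIndependent K fun j ↦ f • x j - (μ : K) • x j) :
    k ≤ projNorm f := by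
  refine le_projNorm_iff.2 fun μ ↦ ?_
  have hli : LinearIndependent K fun j ↦ (⟨f • x j - (μ : K) • x j, x j, rfl⟩ :
      LinearMap.range ((f : Module.End K V) - (μ : K) • (1 : Module.End K V))) :=
    .of_comp (Submodule.subtype _) (hx μ)
  simpa using hli.fintype_card_le_finrank

theorem exists_notMem_and_smul_notMem_sup_span [FiniteDimensional K V] {R : Submodule K V}
    (hR : finrank K R + 1 < finrank K V) {g : (Module.End K V)ˣ}
    (hg : finrank K R < projNorm g) : ∃ y ∉ R, g • y ∉ R ⊔ span K {y} := by
  by_contra! hcon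
  obtain ⟨a, ha⟩ := exists_forall_sub_smul_mem hR (f := (g : Module.End K V)) hcon
  have ha0 : a ≠ 0 := by
    rintro rfl
    obtain ⟨z, hz⟩ := exists_notMem_of_finrank_lt (R := R) (by omega)
    have := ha (g⁻¹ • z)
    rw [zero_smul, sub_zero] at this
    exact hz (smul_inv_smul g z ▸ this)
  have hrange : LinearMap.range ((g : Module.End K V) - a • (1 : Module.End K V)) ≤ R := by
    rintro _ ⟨v, rfl⟩
    exact ha v
  exact hg.not_ge ((projNorm_le_finrank_range g (Units.mk0 a ha0)).trans (finrank_mono hrange))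

theorem projDiamGL_le_finrank [FiniteDimensional K V] : projDiamGL K V ≤ finrank K V := by
  refine csSup_le ⟨_, 1, rfl⟩ ?_
  rintro _ ⟨g, rfl⟩
  exact (projNorm_le_finrank_range g 1).trans (finrank_le _)

theorem finrank_span_range_sup_span_range_le {k : ℕ} (x y : Fin k → V) :
    finrank K ↥(span K (Set.range x) ⊔ span K (Set.range y)) ≤ k * 2 := by
  rw [← span_union, ← Set.Sum.elim_range]
  exact (finrank_range_le_card (R := K) (Sum.elim x y)).trans (by simp [mul_two])

theorem linearIndependent_snoc_sub_smul {k : ℕ} {x y : Fin k → V} {x' y' : V} {μ : K}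
    (hxy : LinearIndependent K fun j ↦ y j - μ • x j)
    (hy' : y' ∉ span K (Set.range x) ⊔ span K (Set.range y) ⊔ span K {x'}) :
    LinearIndependent K fun j ↦
      (Fin.snoc y y' : Fin (k + 1) → V) j - μ • (Fin.snoc x x' : Fin (k + 1) → V) j := by
  have hsnoc : (fun j ↦ (Fin.snoc y y' : Fin (k + 1) → V) j -
      μ • (Fin.snoc x x' : Fin (k + 1) → V) j) =
        Fin.snoc (fun j ↦ y j - μ • x j) (y' - μ • x') := by
    ext j
    cases j using Fin.lastCases <;> simp only [Fin.snoc_last, Fin.snoc_castSucc]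
  have hspan : span K (Set.range fun j ↦ y j - μ • x j) ≤
      span K (Set.range x) ⊔ span K (Set.range y) := by
    rw [span_le]
    rintro _ ⟨j, rfl⟩
    exact sub_mem (mem_sup_right (subset_span ⟨j, rfl⟩))
      (smul_mem _ μ (mem_sup_left (subset_span ⟨j, rfl⟩)))
  rw [hsnoc, linearIndependent_finSnoc]
  refine ⟨hxy, fun hmem ↦ hy' ?_⟩
  have hx' : μ • x' ∈ span K {x'} := smul_mem _ μ (mem_span_singleton_self x')
  simpa only [sub_add_cancel] using
    add_mem (mem_sup_left (T := span K {x'}) (hspan hmem)) (mem_sup_right hx')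

end LinearAlgebra

section Word

theorem wordEval_succ {G : Type*} [Group G] {l r : ℕ} (c : Fin (l + 2) → G)
    (ι : Fin (l + 1) → Fin r) (ε : Fin (l + 1) → ℤ) (h : Fin r → G) :
    wordEval c ι ε h = wordEval (Fin.init c) (Fin.init ι) (Fin.init ε) h *
      h (ι (Fin.last l)) ^ ε (Fin.last l) * c (Fin.last (l + 1)) := by
  simp only [wordEval, List.ofFn_succ', List.concat_eq_append, List.prod_append,
    List.prod_singleton, mul_assoc, Fin.succ_last]
  rfl

variable {K V : Type*} [Field K] [AddCommGroup V] [Module K V] {l r : ℕ}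

theorem critLength_le_finrank [FiniteDimensional K V] (c : Fin (l + 1) → (Module.End K V)ˣ)
    (ι : Fin l → Fin r) (ε : Fin l → ℤ) : critLength c ι ε ≤ finrank K V :=
  (Nat.sInf_le (Set.mem_insert _ _)).trans projDiamGL_le_finrank

theorem critLength_le_projNorm (c : Fin (l + 1) → (Module.End K V)ˣ) {ι : Fin l → Fin r}
    {ε : Fin l → ℤ} {j : ℕ} (hj : j + 1 < l) (hι : ι ⟨j, by omega⟩ = ι ⟨j + 1, hj⟩)
    (hε : ε ⟨j, by omega⟩ = -ε ⟨j + 1, hj⟩) :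
    critLength c ι ε ≤ projNorm (c ⟨j + 1, by omega⟩) :=
  Nat.sInf_le (Set.mem_insert_of_mem _ ⟨j, hj, hι, hε, rfl⟩)

theorem critLength_le_critLength_init (c : Fin (l + 2) → (Module.End K V)ˣ)
    (ι : Fin (l + 1) → Fin r) (ε : Fin (l + 1) → ℤ) :
    critLength c ι ε ≤ critLength (Fin.init c) (Fin.init ι) (Fin.init ε) := by
  refine csInf_le_csInf (OrderBot.bddBelow _) (Set.insert_nonempty _ _)
    (Set.insert_subset_insert ?_)
  rintro _ ⟨j, hj, hι, hε, rfl⟩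
  exact ⟨j, hj.trans (Nat.lt_succ_self l), hι, hε, rfl⟩

end Word

/-- An element of `SL(V)` together with a subspace on which its values are already prescribed;
the order is extension of the prescription. Elements with the same prescription are
equivalent in this preorder, whatever they do off the subspace. -/
structure PartialSL (K V : Type*) [Field K] [AddCommGroup V] [Module K V] where
  toGL : (Module.End K V)ˣ
  det_toGL : LinearMap.det (toGL : Module.End K V) = 1
  domain : Submodule K V

namespace PartialSL

variable {K V : Type*} [Field K] [AddCommGroup V] [Module K V]

instance : Preorder (PartialSL K V) where
  le s t := s.domain ≤ t.domain ∧ ∀ a ∈ s.domain, t.toGL • a = s.toGL • a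
  le_refl _ := ⟨le_rfl, fun _ _ ↦ rfl⟩
  le_trans _ _ _ hst htu := ⟨hst.1.trans htu.1, fun a ha ↦
    (htu.2 a (hst.1 ha)).trans (hst.2 a ha)⟩

/-- The subspace on which `s.toGL ^ e` is prescribed, for `e = 1` or `e = -1`; it is not meant to
be used for other exponents. -/
def source (s : PartialSL K V) (e : ℤ) : Submodule K V :=
  if e = 1 then s.domain else s.domain.map (s.toGL : Module.End K V)

/-- `t` extends `s` by the single further requirement that its `e`-th power sends `x` to `y`. -/
structure ExtendsBy (s : PartialSL K V) (e : ℤ) (x y : V) (t : PartialSL K V) : Prop where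
  le : s ≤ t
  zpow_smul : t.toGL ^ e • x = y
  source_eq : t.source e = s.source e ⊔ span K {x}
  source_neg_eq : t.source (-e) = s.source (-e) ⊔ span K {y}

theorem zpow_smul_eq_of_le {s t : PartialSL K V} (hst : s ≤ t) {e : ℤ} (he : e = 1 ∨ e = -1)
    {x : V} (hx : x ∈ s.source e) : t.toGL ^ e • x = s.toGL ^ e • x := by
  rcases he with rfl | rfl
  · simpa only [zpow_one] using hst.2 x hx
  · obtain ⟨a, ha, rfl⟩ := hx
    change t.toGL ^ (-1 : ℤ) • s.toGL • a = s.toGL ^ (-1 : ℤ) • s.toGL • a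
    rw [zpow_neg_one, zpow_neg_one, inv_smul_smul, ← hst.2 a ha, inv_smul_smul]

theorem finrank_source (s : PartialSL K V) (e : ℤ) :
    finrank K (s.source e) = finrank K s.domain := by
  by_cases he : e = 1
  · rw [source, if_pos he]
  · rw [source, if_neg he]
    exact LinearEquiv.finrank_map_eq
      (LinearMap.GeneralLinearGroup.generalLinearEquiv K V s.toGL) s.domain

theorem source_ne_top {s : PartialSL K V} (hs : finrank K s.domain < finrank K V) (e : ℤ) :
    s.source e ≠ ⊤ :=
  (lt_top_of_finrank_lt_finrank ((s.finrank_source e).trans_lt hs)).ne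

namespace ExtendsBy

variable {s t u : PartialSL K V} {e : ℤ} {x y : V}

theorem symm (h : s.ExtendsBy e x y t) : s.ExtendsBy (-e) y x t where
  le := h.le
  zpow_smul := by rw [← h.zpow_smul, zpow_neg, inv_smul_smul]
  source_eq := h.source_neg_eq
  source_neg_eq := by rw [neg_neg, h.source_eq]

theorem zpow_smul_of_le (h : s.ExtendsBy e x y t) (he : e = 1 ∨ e = -1) (htu : t ≤ u) :
    u.toGL ^ e • x = y := by
  have hx : x ∈ t.source e := h.source_eq ▸ mem_sup_right (mem_span_singleton_self x)
  rw [zpow_smul_eq_of_le htu he hx, h.zpow_smul]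

theorem finrank_domain_le [FiniteDimensional K V] (h : s.ExtendsBy e x y t) :
    finrank K t.domain ≤ finrank K s.domain + 1 := by
  rw [← t.finrank_source e, ← s.finrank_source e, h.source_eq]
  exact finrank_sup_span_singleton_le _ x

end ExtendsBy

variable {r : ℕ}

/-- The subspace to be avoided by a vector that is about to be moved by the rightmost letter of a
word: the source of that letter or, once the word is exhausted, a given subspace `E`. -/
def obstacle (E : Submodule K V) (s : Fin r → PartialSL K V) :
    {l : ℕ} → (Fin l → Fin r) → (Fin l → ℤ) → Submodule K V
  | 0, _, _ => E
  | l + 1, ι, ε => (s (ι (Fin.last l))).source (ε (Fin.last l))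

theorem exists_forall_smul_notMem_obstacle {l : ℕ} (hl : 0 < l) (g : (Module.End K V)ˣ)
    (ι : Fin l → Fin r) (ε : Fin l → ℤ) {s : Fin r → PartialSL K V}
    (hs : ∀ i, finrank K (s i).domain < finrank K V) :
    ∃ x, ∀ E, g • x ∉ obstacle E s ι ε := by
  obtain ⟨l, rfl⟩ := Nat.exists_eq_succ_of_ne_zero hl.ne'
  obtain ⟨y, hy⟩ := exists_notMem_of_finrank_lt
    (((s (ι (Fin.last l))).finrank_source (ε (Fin.last l))).trans_lt (hs _))
  exact ⟨g⁻¹ • y, fun E ↦ by rwa [smul_inv_smul]⟩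

variable [FiniteDimensional K V]

theorem exists_extendsBy_one {s : PartialSL K V} (hs : finrank K s.domain + 1 < finrank K V)
    {x y : V} (hx : x ∉ s.source 1) (hy : y ∉ s.source (-1)) : ∃ t, s.ExtendsBy 1 x y t := by
  obtain ⟨g, hg, hgs, hgx⟩ := exists_det_eq_and_smul_eq hs s.toGL hx hy
  refine ⟨⟨g, hg.trans s.det_toGL, s.domain ⊔ span K {x}⟩, ⟨le_sup_left, hgs⟩, ?_, rfl, ?_⟩
  · rw [zpow_one, hgx]
  · have hmap : s.domain.map (g : Module.End K V) = s.domain.map (s.toGL : Module.End K V) :=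
      SetLike.coe_injective (Set.image_congr hgs)
    change (s.domain ⊔ span K {x}).map (g : Module.End K V) = _ ⊔ span K {y}
    rw [Submodule.map_sup, hmap, map_span, Set.image_singleton, ← hgx]
    rfl

theorem exists_extendsBy {s : PartialSL K V} (hs : finrank K s.domain + 1 < finrank K V)
    {e : ℤ} (he : e = 1 ∨ e = -1) {x y : V} (hx : x ∉ s.source e) (hy : y ∉ s.source (-e)) :
    ∃ t, s.ExtendsBy e x y t := by
  rcases he with rfl | rfl
  · exact exists_extendsBy_one hs hx hy
  · exact (exists_extendsBy_one hs hy hx).imp fun _ h ↦ h.symm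

theorem exists_forall_extendsBy_smul_notMem_source {s : Fin r → PartialSL K V} {k : ℕ}
    (hs : ∀ i, finrank K (s i).domain ≤ k) (hk : k + 1 < finrank K V) {i i' : Fin r} {e e' : ℤ}
    (he : e = 1 ∨ e = -1) (he' : e' = 1 ∨ e' = -1) {g : (Module.End K V)ˣ}
    (hg : i' = i → e' = -e → k < projNorm g) (x : V) :
    ∃ y ∉ (s i).source (-e), ∀ t, (s i).ExtendsBy e x y t →
      g • y ∉ (Function.update s i t i').source e' := by
  have hlt : ∀ j, finrank K (s j).domain < finrank K V := fun j ↦ (hs j).trans_lt (by omega)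
  have htop := source_ne_top (hlt i) (-e)
  by_cases hi : i' = i
  · subst hi
    simp only [Function.update_self]
    by_cases hee : e' = -e
    · subst hee
      have hrank := ((s i').finrank_source (-e)).trans_le (hs i')
      obtain ⟨y, hy, hgy⟩ := exists_notMem_and_smul_notMem_sup_span (R := (s i').source (-e))
        (by omega) (hrank.trans_lt (hg rfl rfl))
      exact ⟨y, hy, fun t ht ↦ ht.source_neg_eq ▸ hgy⟩
    · obtain rfl : e' = e := by omega
      have hrank := ((s i').finrank_source e').trans_le (hs i')
      have hsup : (s i').source e' ⊔ span K {x} ≠ ⊤ := (lt_top_of_finrank_lt_finrank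
        ((finrank_sup_span_singleton_le _ x).trans_lt (by omega))).ne
      obtain ⟨y, hy, hgy⟩ := exists_notMem_and_smul_notMem htop hsup g
      exact ⟨y, hy, fun t ht ↦ ht.source_eq ▸ hgy⟩
  · obtain ⟨y, hy, hgy⟩ := exists_notMem_and_smul_notMem htop (source_ne_top (hlt i') e') g
    exact ⟨y, hy, fun t _ ↦ by rwa [Function.update_of_ne hi]⟩

theorem exists_forall_extendsBy_smul_notMem_obstacle {E : Submodule K V} (hE : E ≠ ⊤) {l k : ℕ}
    (c : Fin (l + 2) → (Module.End K V)ˣ) (ι : Fin (l + 1) → Fin r) {ε : Fin (l + 1) → ℤ}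
    (hε : ∀ j, ε j = 1 ∨ ε j = -1) (hk : k + (l + 1) < critLength c ι ε)
    {s : Fin r → PartialSL K V} (hs : ∀ i, finrank K (s i).domain ≤ k) (x : V) :
    ∃ y ∉ (s (ι (Fin.last l))).source (-ε (Fin.last l)),
      ∀ t, (s (ι (Fin.last l))).ExtendsBy (ε (Fin.last l)) x y t →
        Fin.init c (Fin.last l) • y ∉
          obstacle E (Function.update s (ι (Fin.last l)) t) (Fin.init ι) (Fin.init ε) := by
  have hn := critLength_le_finrank c ι ε
  cases l with
  | zero =>
    have hlt := (hs (ι (Fin.last 0))).trans_lt (show k < finrank K V by omega)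
    obtain ⟨y, hy, hcy⟩ := exists_notMem_and_smul_notMem (source_ne_top hlt (-ε (Fin.last 0))) hE
      (Fin.init c (Fin.last 0))
    exact ⟨y, hy, fun _ _ ↦ hcy⟩
  | succ l =>
    refine exists_forall_extendsBy_smul_notMem_source hs (by omega) (hε _) (hε _) (fun hι he ↦ ?_) x
    exact (show k < critLength c ι ε by omega).trans_le
      (critLength_le_projNorm c (Nat.lt_succ_self (l + 1)) hι he)

theorem exists_wordEval_smul_notMem {E : Submodule K V} (hE : E ≠ ⊤) {l k : ℕ}
    (c : Fin (l + 1) → (Module.End K V)ˣ) (ι : Fin l → Fin r) {ε : Fin l → ℤ}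
    (hε : ∀ j, ε j = 1 ∨ ε j = -1) (hk : k + l < critLength c ι ε)
    {s : Fin r → PartialSL K V} (hs : ∀ i, finrank K (s i).domain ≤ k) {x : V}
    (hx : c (Fin.last l) • x ∉ obstacle E s ι ε) :
    ∃ t ≥ s, (∀ i, finrank K (t i).domain ≤ k + l) ∧
      ∃ z ∉ E, ∀ u ≥ t, wordEval c ι ε (fun i ↦ (u i).toGL) • x = z := by
  induction l generalizing k s x with
  | zero => exact ⟨s, le_rfl, hs, c 0 • x, hx, fun u _ ↦ by simp [wordEval]⟩
  | succ l ih =>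
    have hn := critLength_le_finrank c ι ε
    obtain ⟨y, hy, hcy⟩ := exists_forall_extendsBy_smul_notMem_obstacle hE c ι hε hk hs
      (c (Fin.last (l + 1)) • x)
    obtain ⟨t, ht⟩ := exists_extendsBy (by have := hs (ι (Fin.last l)); omega) (hε _) hx hy
    have hst : s ≤ Function.update s (ι (Fin.last l)) t := le_update_self_iff.2 ht.le
    have hdomain : ∀ i, finrank K (Function.update s (ι (Fin.last l)) t i).domain ≤ k + 1 := by
      intro i
      rcases eq_or_ne i (ι (Fin.last l)) with rfl | hi
      · rw [Function.update_self]
        exact ht.finrank_domain_le.trans (Nat.succ_le_succ (hs _))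
      · rw [Function.update_of_ne hi]
        exact (hs i).trans (Nat.le_succ k)
    obtain ⟨v, htv, hv, z, hz, hvz⟩ := ih (Fin.init c) (Fin.init ι)
      (ε := Fin.init ε) (fun j ↦ hε j.castSucc)
      ((by omega : k + 1 + l < critLength c ι ε).trans_le (critLength_le_critLength_init c ι ε))
      hdomain (hcy t ht)
    refine ⟨v, hst.trans htv, fun i ↦ (hv i).trans (by omega), z, hz, fun u hvu ↦ ?_⟩
    have htu : t ≤ u (ι (Fin.last l)) := by simpa using (htv.trans hvu) (ι (Fin.last l))
    rw [wordEval_succ, mul_smul, mul_smul, ht.zpow_smul_of_le (hε _) htu, hvz u hvu]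

theorem exists_wordEval_smul_notMem_sup_span {l k : ℕ} (hl : 0 < l) (g : (Module.End K V)ˣ)
    (c : Fin (l + 1) → (Module.End K V)ˣ) (ι : Fin l → Fin r) {ε : Fin l → ℤ}
    (hε : ∀ j, ε j = 1 ∨ ε j = -1) (hk : k + l < critLength c ι ε)
    {s : Fin r → PartialSL K V} (hs : ∀ i, finrank K (s i).domain ≤ k) {B : Submodule K V}
    (hB : finrank K B + 1 < finrank K V) :
    ∃ t ≥ s, (∀ i, finrank K (t i).domain ≤ k + l) ∧ ∃ x y, y ∉ B ⊔ span K {x} ∧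
      ∀ u ≥ t, (g * wordEval c ι ε fun i ↦ (u i).toGL) • x = y := by
  have hn := critLength_le_finrank c ι ε
  obtain ⟨x, hx⟩ := exists_forall_smul_notMem_obstacle hl (c (Fin.last l)) ι ε
    fun i ↦ (hs i).trans_lt (by omega)
  have hBx : B ⊔ span K {x} ≠ ⊤ :=
    (lt_top_of_finrank_lt_finrank ((finrank_sup_span_singleton_le B x).trans_lt hB)).ne
  obtain ⟨t, hst, ht, z, hz, htz⟩ :=
    exists_wordEval_smul_notMem (comap_units_ne_top hBx g) c ι hε hk hs (hx _)
  exact ⟨t, hst, ht, x, g • z, hz, fun u htu ↦ by rw [mul_smul, htz u htu]⟩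

theorem exists_forall_linearIndependent_sub_smul {l : ℕ} (hl : 2 ≤ l) (g : (Module.End K V)ˣ)
    (c : Fin (l + 1) → (Module.End K V)ˣ) (ι : Fin l → Fin r) {ε : Fin l → ℤ}
    (hε : ∀ j, ε j = 1 ∨ ε j = -1) (k : ℕ) (hk : k * l < critLength c ι ε) :
    ∃ s : Fin r → PartialSL K V, (∀ i, finrank K (s i).domain ≤ k * l) ∧ ∃ x y : Fin k → V,
      (∀ μ : K, LinearIndependent K fun j ↦ y j - μ • x j) ∧
        ∀ u ≥ s, ∀ j, (g * wordEval c ι ε fun i ↦ (u i).toGL) • x j = y j := by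
  induction k with
  | zero =>
    exact ⟨fun _ ↦ ⟨1, LinearMap.det_id, ⊥⟩, fun _ ↦ by simp, Fin.elim0, Fin.elim0,
      fun _ ↦ linearIndependent_empty_type, fun _ _ j ↦ j.elim0⟩
  | succ k ih =>
    rw [Nat.succ_mul] at hk ⊢
    have hn := critLength_le_finrank c ι ε
    obtain ⟨s, hs, x, y, hxy, hsxy⟩ := ih (by omega)
    have hkl : k * 2 ≤ k * l := Nat.mul_le_mul_left k hl
    have hB := (Nat.succ_le_succ (finrank_span_range_sup_span_range_le (K := K) x y)).trans_lt
      (show k * 2 + 1 < finrank K V by omega)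
    obtain ⟨t, hst, ht, x', y', hy', hty'⟩ :=
      exists_wordEval_smul_notMem_sup_span (by omega) g c ι hε hk hs hB
    refine ⟨t, ht, Fin.snoc x x', Fin.snoc y y',
      fun μ ↦ linearIndependent_snoc_sub_smul (hxy μ) hy', fun u htu j ↦ ?_⟩
    cases j using Fin.lastCases with
    | last => simpa only [Fin.snoc_last] using hty' u htu
    | cast j => simpa only [Fin.snoc_castSucc] using hsxy u (hst.trans htu) j

end PartialSL

theorem diam_word_image_lower_bound_general {K V : Type*} [Field K] [AddCommGroup V] [Module K V]
    [FiniteDimensional K V] {l r : ℕ} (hl : 2 ≤ l) (g : (Module.End K V)ˣ)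
    (c : Fin (l + 1) → (Module.End K V)ˣ) (ι : Fin l → Fin r) (ε : Fin l → ℤ)
    (hε : ∀ j, ε j = 1 ∨ ε j = -1) :
    ∃ h : Fin r → (Module.End K V)ˣ, (∀ i, LinearMap.det (h i : Module.End K V) = 1) ∧
      critLength c ι ε ≤ l * (projNorm (g⁻¹ * wordEval c ι ε h) + 1) := by
  rcases Nat.eq_zero_or_pos (critLength c ι ε) with h0 | hpos
  · exact ⟨1, fun _ ↦ LinearMap.det_id, h0 ▸ Nat.zero_le _⟩
  have hk : (critLength c ι ε - 1) / l * l < critLength c ι ε :=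
    (Nat.div_mul_le_self _ _).trans_lt (by omega)
  obtain ⟨s, -, x, y, hxy, hsxy⟩ :=
    PartialSL.exists_forall_linearIndependent_sub_smul hl g⁻¹ c ι hε _ hk
  have hnorm := le_projNorm_of_linearIndependent (x := x)
    (f := g⁻¹ * wordEval c ι ε fun i ↦ (s i).toGL) fun μ ↦ by
      simpa only [hsxy s le_rfl] using hxy μ
  refine ⟨fun i ↦ (s i).toGL, fun i ↦ (s i).det_toGL, ?_⟩
  calc critLength c ι ε ≤ l * ((critLength c ι ε - 1) / l + 1) :=
        Nat.le_of_pred_lt (Nat.lt_mul_div_succ _ (by omega))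
    _ ≤ _ := Nat.mul_le_mul_left l (Nat.succ_le_succ hnorm)

/-- Diameter bound for the image of a word map with constants: the word image
`w(SL(V)^r)` has diameter at least `‖w‖_crit / l - 1` in the projective rank seminorm,
i.e. there are points of the image at projective rank distance `≥ ‖w‖_crit / l - 1`. -/
theorem diam_word_image_lower_bound {K V : Type*} [Field K] [AddCommGroup V] [Module K V]
    [FiniteDimensional K V] (hK : Finite K ∨ Nonempty (K ≃+* ℂ))
    {n l r : ℕ} (hn : Module.finrank K V = n) (hl : 2 ≤ l)
    (c : Fin (l + 1) → (Module.End K V)ˣ) (ι : Fin l → Fin r) (ε : Fin l → ℤ)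
    (hε : ∀ j, ε j = 1 ∨ ε j = -1)
    -- the word is reduced with respect to `SL(V)`:
    (hredcrit : ∀ j : Fin l, ∀ hj : (j : ℕ) + 1 < l,
      (ι j = ι ⟨(j : ℕ) + 1, hj⟩ ∧ ε j = -ε ⟨(j : ℕ) + 1, hj⟩) →
      c j.succ ∉ Subgroup.centralizer
        {g : (Module.End K V)ˣ | LinearMap.det (g : Module.End K V) = 1})
    (hrednoncrit : ∀ j : Fin l, ∀ hj : (j : ℕ) + 1 < l,
      ¬(ι j = ι ⟨(j : ℕ) + 1, hj⟩ ∧ ε j = -ε ⟨(j : ℕ) + 1, hj⟩) →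
      (c j.succ = 1 ∨ c j.succ ∉ Subgroup.centralizer
        {g : (Module.End K V)ˣ | LinearMap.det (g : Module.End K V) = 1})) :
    ∃ h h' : Fin r → (Module.End K V)ˣ,
      (∀ i, LinearMap.det ((h i : Module.End K V)) = 1) ∧
      (∀ i, LinearMap.det ((h' i : Module.End K V)) = 1) ∧
      critLength c ι ε ≤ l * (projNorm ((wordEval c ι ε h)⁻¹ * wordEval c ι ε h') + 1) :=
  let ⟨h, hdet, hle⟩ := diam_word_image_lower_bound_general hl (wordEval c ι ε 1) c ι ε hε
  ⟨1, h, fun _ ↦ LinearMap.det_id, hdet, hle⟩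
end

section
/- For any fixed prime power q, if w ∈ PSL_n(q) ∗ F_r is a non-singular mixed identity for PSL_n(q) (w(h₁,…,h_r) = 1 for all h_i, w non-trivial with non-trivial content), then the length of w satisfies |w| ≥ C·log(n)/log(log(n)) for some absolute constant C > 0 (for n large). -/
/-!
A nontrivial element of a free group given by a word of length `l` acts nontrivially in some
permutation action on at most `l + 1` points, so it is enough to let permutations act on
`V = K ^ n` in a way that ignores the constants of the word. Only the products `T` of the constants
over suffixes of the word matter; they span a space `𝓐` of operators of dimension at most `l + 1`.
If `n` is large compared with `l`, there is a subspace `U` of `V` on which every operator of `𝓐`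
vanishes or has large rank, and then, by counting over the finite field, vectors `u_t` of `U` such
that the spaces `𝓐 u_t` are independent copies of the restriction of `𝓐` to `U`. Permuting these
copies gives matrices `ρ σ` with `ρ σ (T u_t) = T u_{σ t}` for all `T` in `𝓐`. Under the resulting
substitution the word sends `u_t` to its value at the trivial substitution applied to `u_{σ t}`,
where `σ` is the image of the content; so the two values differ on a line `K u_t` with `σ t ≠ t`.
-/

namespace MixedIdentity

section Permutations

open Equiv

/-- The diagonal action of `Perm α` on two disjoint copies of `α`. -/
def permDouble (α : Type*) : Perm α →* Perm (α ⊕ α) :=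
  (Perm.sumCongrHom α α).comp ((MonoidHom.id _).prod (MonoidHom.id _))

theorem permDouble_swap {α : Type*} [DecidableEq α] (x y : α) :
    permDouble α (swap x y) =
      swap (Sum.inl x) (Sum.inl y) * swap (Sum.inr x) (Sum.inr y) := by
  change Perm.sumCongr (swap x y) (swap x y) = _
  rw [← Perm.sumCongr_swap_one, ← Perm.sumCongr_one_swap, Perm.sumCongr_mul, mul_one, one_mul]

theorem comp_permDouble_eq_one {α M : Type*} [Finite α] [CommMonoid M]
    (f : Perm (α ⊕ α) →* M) : f.comp (permDouble α) = 1 := by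
  classical
  refine MonoidHom.eq_of_eqOn_denseM Perm.mclosure_isSwap ?_
  rintro _ ⟨x, y, hxy, rfl⟩
  have hconj : f (swap (Sum.inl x) (Sum.inl y)) = f (swap (Sum.inr x) (Sum.inr y)) :=
    isConj_iff_eq.1 (f.map_isConj (Perm.isConj_swap (by simpa) (by simpa)))
  rw [MonoidHom.comp_apply, permDouble_swap, map_mul, hconj, ← map_mul, swap_mul_self, map_one,
    MonoidHom.one_apply]

theorem exists_perm_coe_eq_mul {G : Type*} [Mul G] [IsLeftCancelMul G] (S : Finset G) (g : G) :
    ∃ σ : Perm S, ∀ x : S, g * x ∈ S → (σ x : G) = g * x := by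
  obtain ⟨σ, hσ⟩ := Set.MapsTo.exists_equiv_extend_of_card_eq (Fintype.card_coe S)
    (s := {x : S | g * x ∈ S}) (f := fun x => g * x) (fun _ hx => hx)
    (fun _ _ _ _ h => Subtype.ext (mul_left_cancel h))
  exact ⟨σ, hσ⟩

-- The points are the suffixes of the reduced word of `g`: reading the word from the right moves
-- `1` along them up to `g`.
theorem exists_hom_perm_ne_one {X : Type*} [DecidableEq X] {g : FreeGroup X} (hg : g ≠ 1) :
    ∃ S : Finset (FreeGroup X), S.card ≤ g.norm + 1 ∧ ∃ f : FreeGroup X →* Perm S, f g ≠ 1 := by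
  let S : Finset (FreeGroup X) := (g.toWord.tails.map FreeGroup.mk).toFinset
  have suffix_mem {L : List (X × Bool)} (hL : L <:+ g.toWord) : FreeGroup.mk L ∈ S :=
    List.mem_toFinset.2 (List.mem_map_of_mem ((List.mem_tails _ _).2 hL))
  choose σ hσ using fun x : X => exists_perm_coe_eq_mul S (FreeGroup.of x)
  let e : S := ⟨1, suffix_mem List.nil_suffix⟩
  have orbit (L : List (X × Bool)) (hL : L <:+ g.toWord) :
      (FreeGroup.lift σ (FreeGroup.mk L) e : FreeGroup X) = FreeGroup.mk L := by
    induction L with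
    | nil => rfl
    | cons p L ih =>
      have hL' : L <:+ g.toWord := (List.suffix_cons p L).trans hL
      have tail : FreeGroup.lift σ (FreeGroup.mk L) e = ⟨FreeGroup.mk L, suffix_mem hL'⟩ :=
        Subtype.ext (ih hL')
      have split (q : X × Bool) :
          FreeGroup.mk (q :: L) = FreeGroup.mk [q] * FreeGroup.mk L := by simp
      obtain ⟨x, _ | _⟩ := p
      · have head : FreeGroup.mk [(x, false)] = (FreeGroup.of x)⁻¹ := rfl
        have cancel : FreeGroup.of x * FreeGroup.mk ((x, false) :: L) = FreeGroup.mk L := by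
          rw [split, head, mul_inv_cancel_left]
        have step : σ x ⟨_, suffix_mem hL⟩ = ⟨FreeGroup.mk L, suffix_mem hL'⟩ :=
          Subtype.ext ((hσ x _ (cancel ▸ suffix_mem hL')).trans cancel)
        rw [split, map_mul, head, map_inv, FreeGroup.lift_apply_of, Perm.mul_apply, tail, ← step,
          Perm.inv_def, symm_apply_apply]
        exact eq_inv_mul_of_mul_eq cancel
      · have head : FreeGroup.mk [(x, true)] = FreeGroup.of x := rfl
        have step := hσ x ⟨FreeGroup.mk L, suffix_mem hL'⟩
          (by rw [← head, ← split]; exact suffix_mem hL)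
        rw [split, map_mul, head, FreeGroup.lift_apply_of, Perm.mul_apply, tail, step]
  refine ⟨S, ?_, FreeGroup.lift σ, fun h => hg ?_⟩
  · simpa [FreeGroup.norm] using List.toFinset_card_le (g.toWord.tails.map FreeGroup.mk)
  · have := orbit g.toWord List.suffix_rfl
    rw [FreeGroup.mk_toWord, h] at this
    exact this.symm

end Permutations

section LinearAlgebra

open Module

variable {K V W : Type*} [Field K] [AddCommGroup V] [Module K V] [AddCommGroup W]
  [Module K W]

/-- The map `(T_t) ↦ ∑ t, T_t (u_t)` evaluating a tuple of operators in `𝓐` at the vectors `u_t`. -/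
def evalSum {τ : Type*} [Fintype τ] (𝓐 : Submodule K (V →ₗ[K] W)) (u : τ → V) :
    (τ → 𝓐) →ₗ[K] W :=
  ∑ t, (LinearMap.applyₗ (u t)).comp (𝓐.subtype.comp (LinearMap.proj t))

theorem evalSum_apply {τ : Type*} [Fintype τ] (𝓐 : Submodule K (V →ₗ[K] W)) (u : τ → V)
    (T : τ → 𝓐) : evalSum 𝓐 u T = ∑ t, (T t).1 (u t) := by
  simp [evalSum]

theorem evalSum_single {τ : Type*} [Fintype τ] [DecidableEq τ] (𝓐 : Submodule K (V →ₗ[K] W))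
    (u : τ → V) (t : τ) (T : 𝓐) : evalSum 𝓐 u (Pi.single t T) = T.1 (u t) := by
  rw [evalSum_apply, Fintype.sum_eq_single t fun s hs => by simp [hs], Pi.single_eq_same]

theorem linearIndependent_of_injective_evalSum {τ : Type*} [Fintype τ]
    {𝓐 : Submodule K (V →ₗ[K] W)} {u : τ → V} (hu : Function.Injective (evalSum 𝓐 u))
    {T : V →ₗ[K] W} (hT : T ∈ 𝓐) (hT0 : T ≠ 0) : LinearIndependent K fun t => T (u t) := by
  refine Fintype.linearIndependent_iff.2 fun a ha t => ?_
  have h_zero : (fun t => a t • (⟨T, hT⟩ : 𝓐)) = 0 := hu <| by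
    rw [map_zero, evalSum_apply, ← ha]
    rfl
  exact (smul_eq_zero.1 (Subtype.ext_iff.1 (congrFun h_zero t))).resolve_right hT0

variable [FiniteDimensional K V]

theorem finrank_map_add_finrank_inf_ker (T : V →ₗ[K] W) (U : Submodule K V) :
    finrank K (U.map T) + finrank K (U ⊓ LinearMap.ker T : Submodule K V) = finrank K U := by
  rw [← LinearMap.finrank_range_add_finrank_ker (T.domRestrict U), LinearMap.range_domRestrict,
    LinearMap.ker_domRestrict, ← Submodule.map_comap_subtype, Submodule.finrank_map_subtype_eq]

theorem finrank_comap_add_finrank_range_le [FiniteDimensional K W] (T : V →ₗ[K] W)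
    (Z : Submodule K W) :
    finrank K (Z.comap T) + finrank K (LinearMap.range T) ≤ finrank K V + finrank K Z := by
  have h_map : finrank K ((Z.comap T).map T) ≤ finrank K Z :=
    Submodule.finrank_mono (Submodule.map_comap_le T Z)
  have h_ker : finrank K (Z.comap T ⊓ LinearMap.ker T : Submodule K V) ≤
      finrank K (LinearMap.ker T) := Submodule.finrank_mono inf_le_right
  have := finrank_map_add_finrank_inf_ker T (Z.comap T)
  have := LinearMap.finrank_range_add_finrank_ker T
  omega

-- Among the subspaces `U` with `dim V ≤ dim U + R * dim {T ∈ 𝓐 | T = 0 on U}`, a minimal one works: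
-- passing to the kernel of a nonzero operator of rank at most `R` on `U` preserves the inequality.
theorem exists_ne_bot_forall_lt_finrank_map (𝓐 : Submodule K (V →ₗ[K] W))
    [FiniteDimensional K 𝓐] (R : ℕ) (h : finrank K 𝓐 * R < finrank K V) :
    ∃ U : Submodule K V, U ≠ ⊥ ∧
      ∀ T ∈ 𝓐, T.domRestrict U ≠ 0 → R < finrank K (U.map T) := by
  let N (U : Submodule K V) : Submodule K 𝓐 :=
    LinearMap.ker ((LinearMap.domRestrict' U).comp 𝓐.subtype)
  have mem_N {U : Submodule K V} {T : 𝓐} : T ∈ N U ↔ T.1.domRestrict U = 0 := Iff.rfl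
  obtain ⟨U, hU, hmin⟩ := wellFounded_lt.has_min
    {U : Submodule K V | finrank K V ≤ finrank K U + R * finrank K (N U)} ⟨⊤, by simp⟩
  rw [Set.mem_ofPred_eq] at hU
  refine ⟨U, ?_, fun T hT hTU => ?_⟩
  · rintro rfl
    have := Nat.mul_le_mul_left R (N ⊥).finrank_le
    rw [finrank_bot] at hU
    lia
  · by_contra! h_rank
    have h_inf := finrank_map_add_finrank_inf_ker T U
    have hU_lt : U ⊓ LinearMap.ker T < U := by
      refine inf_lt_left.2 fun hle => hTU ?_
      ext x
      exact hle x.2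
    have hN_lt : N U < N (U ⊓ LinearMap.ker T) := by
      refine SetLike.lt_iff_le_and_exists.2 ⟨fun A hA => ?_, ⟨T, hT⟩, ?_, fun hmem => hTU hmem⟩
      · ext x
        exact LinearMap.congr_fun (mem_N.1 hA) ⟨x, x.2.1⟩
      · ext x
        exact x.2.2
    have hN := Nat.mul_le_mul_left R (Submodule.finrank_lt_finrank_of_lt hN_lt)
    have hU_inf : finrank K V ≤
        finrank K (U ⊓ LinearMap.ker T : Submodule K V) +
          R * finrank K (N (U ⊓ LinearMap.ker T)) := by
      rw [Nat.mul_succ] at hN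
      lia
    exact hmin _ hU_inf hU_lt

-- Each bad set `{v | T v ∈ Z}` has at most `|V| / |𝓐|` elements, and there are fewer than `|𝓐|`
-- of them.
theorem exists_forall_apply_mem_imp_eq_zero [Finite K] [FiniteDimensional K W]
    (𝓐 : Submodule K (V →ₗ[K] W)) (Z : Submodule K W)
    (h : ∀ T ∈ 𝓐, T ≠ 0 → finrank K 𝓐 + finrank K Z ≤ finrank K (LinearMap.range T)) :
    ∃ v, ∀ T ∈ 𝓐, T v ∈ Z → T = 0 := by
  classical
  have : Finite V := Module.finite_of_finite K
  have : Finite (V →ₗ[K] W) := Module.finite_of_finite K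
  have : Fintype 𝓐 := Fintype.ofFinite 𝓐
  by_contra! h_bad
  let bad (T : {T : 𝓐 // T ≠ 0}) : Set V := Z.comap T.1.1
  have h_cover : ⋃ T, bad T = Set.univ := Set.eq_univ_of_forall fun v => by
    obtain ⟨T, hT, hTv, hT0⟩ := h_bad v
    exact Set.mem_iUnion.2 ⟨⟨⟨T, hT⟩, by simpa using hT0⟩, hTv⟩
  have h_ncard (T) : (bad T).ncard * Nat.card 𝓐 ≤ Nat.card V := by
    have h_rank := h T.1.1 T.1.2 (by simpa using T.2)
    have h_comap := finrank_comap_add_finrank_range_le T.1.1 Z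
    rw [← Nat.card_coe_set_eq]
    change Nat.card (Z.comap T.1.1) * _ ≤ _
    rw [natCard_eq_pow_finrank (K := K) (V := Z.comap T.1.1),
      natCard_eq_pow_finrank (K := K) (V := 𝓐), natCard_eq_pow_finrank (K := K) (V := V), ← pow_add]
    exact Nat.pow_le_pow_right Nat.card_pos (by omega)
  have h_nonzero : Fintype.card {T : 𝓐 // T ≠ 0} < Nat.card 𝓐 := by
    rw [Nat.card_eq_fintype_card]
    exact Fintype.card_subtype_lt (x := 0) (by simp)
  refine lt_irrefl (Nat.card V * Nat.card 𝓐) ?_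
  calc Nat.card V * Nat.card 𝓐 = (⋃ T, bad T).ncard * Nat.card 𝓐 := by
        rw [h_cover, Set.ncard_univ]
    _ ≤ (∑ T, (bad T).ncard) * Nat.card 𝓐 :=
        Nat.mul_le_mul_right _ (Set.ncard_iUnion_le_of_fintype bad)
    _ = ∑ T, (bad T).ncard * Nat.card 𝓐 := Finset.sum_mul ..
    _ ≤ Fintype.card {T : 𝓐 // T ≠ 0} * Nat.card V := by
        simpa using Finset.sum_le_card_nsmul Finset.univ _ _ fun T _ => h_ncard T
    _ < Nat.card V * Nat.card 𝓐 := by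
        rw [mul_comm]
        exact Nat.mul_lt_mul_of_pos_left h_nonzero Nat.card_pos

theorem exists_injective_evalSum [Finite K] [FiniteDimensional K W] {τ : Type*} [Fintype τ]
    (𝓐 : Submodule K (V →ₗ[K] W))
    (h : ∀ T ∈ 𝓐, T ≠ 0 → finrank K 𝓐 * Fintype.card τ ≤ finrank K (LinearMap.range T)) :
    ∃ u : τ → V, Function.Injective (evalSum 𝓐 u) := by
  revert h
  refine Fintype.induction_empty_option (P := fun τ _ => (∀ T ∈ 𝓐, T ≠ 0 →
    finrank K 𝓐 * Fintype.card τ ≤ finrank K (LinearMap.range T)) →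
      ∃ u : τ → V, Function.Injective (evalSum 𝓐 u)) (fun α β _ e ih h => ?_)
    (fun _ => ⟨PEmpty.elim, Function.injective_of_subsingleton _⟩) (fun τ _ ih h => ?_) τ
  · let := Fintype.ofEquiv β e.symm
    obtain ⟨u, hu⟩ := ih (by rwa [Fintype.card_congr e])
    refine ⟨u ∘ e.symm, (injective_iff_map_eq_zero _).2 fun T hT => ?_⟩
    have h_comp : evalSum 𝓐 u (T ∘ e) = 0 := by
      rw [← hT, evalSum_apply, evalSum_apply, ← e.sum_comp]
      simp only [Function.comp_apply, e.symm_apply_apply]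
    exact funext fun b => by
      simpa using congrFun ((injective_iff_map_eq_zero _).1 hu _ h_comp) (e.symm b)
  · rw [Fintype.card_option, Nat.mul_succ] at h
    obtain ⟨u, hu⟩ := ih fun T hT hT0 => by have := h T hT hT0; lia
    have h_range : finrank K (LinearMap.range (evalSum 𝓐 u)) ≤ finrank K 𝓐 * Fintype.card τ :=
      (LinearMap.finrank_range_le _).trans_eq (by simp [finrank_pi_fintype, mul_comm])
    obtain ⟨v, hv⟩ := exists_forall_apply_mem_imp_eq_zero 𝓐 (LinearMap.range (evalSum 𝓐 u))
      fun T hT hT0 => by have := h T hT hT0; lia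
    refine ⟨fun o => o.elim v u, (injective_iff_map_eq_zero _).2 fun T hT => ?_⟩
    have h_split : (T none).1 v + evalSum 𝓐 u (fun t => T (some t)) = 0 := by
      rw [evalSum_apply]
      rwa [evalSum_apply, Fintype.sum_option] at hT
    have h_none : T none = 0 := Subtype.ext <| hv _ (T none).2 <|
      eq_neg_of_add_eq_zero_left h_split ▸ neg_mem (LinearMap.mem_range_self _ _)
    have h_some : (fun t => T (some t)) = 0 :=
      (injective_iff_map_eq_zero _).1 hu _ (by simpa [h_none] using h_split)
    exact funext fun o => o.casesOn h_none (congrFun h_some)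

end LinearAlgebra

section Representations

open Module Equiv

/-- The representation of `Perm τ` on `τ → E` permuting the coordinates. -/
def permFunRep (K E τ : Type*) [CommSemiring K] [AddCommMonoid E] [Module K E] :
    Representation K (Perm τ) (τ → E) where
  toFun σ := LinearMap.funLeft K E ⇑σ⁻¹
  map_one' := rfl
  map_mul' _ _ := rfl

theorem permFunRep_single {K E τ : Type*} [CommSemiring K] [AddCommMonoid E] [Module K E]
    [DecidableEq τ] (σ : Perm τ) (t : τ) (x : E) :
    permFunRep K E τ σ (Pi.single t x) = Pi.single (σ t) x := by
  ext s
  simp [permFunRep, LinearMap.funLeft_apply, Pi.single_apply, Perm.inv_def, symm_apply_eq]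

variable {K V E : Type*} [Field K] [AddCommGroup V] [Module K V] [AddCommGroup E] [Module K E]

theorem exists_representation_extending {G : Type*} [Monoid G] {P : E →ₗ[K] V}
    (hP : Function.Injective P) (S : Representation K G E) :
    ∃ ρ : Representation K G V, ∀ g x, ρ g (P x) = P (S g x) := by
  obtain ⟨Q, hQ⟩ := LinearMap.exists_leftInverse_of_injective P (LinearMap.ker_eq_bot.2 hP)
  have hQ (x : E) : Q (P x) = x := LinearMap.congr_fun hQ x
  let ρ : Representation K G V :=
    { toFun := fun g => P ∘ₗ S g ∘ₗ Q + (1 - P ∘ₗ Q)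
      map_one' := by ext; simp
      map_mul' := fun g h => by ext; simp [hQ] }
  exact ⟨ρ, fun g x => by simp [ρ, hQ]⟩

theorem exists_representation_perm [Finite K] [FiniteDimensional K V] {τ : Type*} [Fintype τ]
    {𝓐 : Submodule K (End K V)} (h_one : 1 ∈ 𝓐)
    (h : finrank K 𝓐 ^ 2 * Fintype.card τ < finrank K V) :
    ∃ (u : τ → V) (ρ : Representation K (Perm τ) V), LinearIndependent K u ∧
      ∀ σ, ∀ T ∈ 𝓐, ∀ t, ρ σ (T (u t)) = T (u (σ t)) := by
  classical
  obtain ⟨U, hU, h_rank⟩ := exists_ne_bot_forall_lt_finrank_map 𝓐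
    (finrank K 𝓐 * Fintype.card τ) (by rwa [← mul_assoc, ← sq])
  let 𝓑 : Submodule K (U →ₗ[K] V) := 𝓐.map (LinearMap.domRestrict' U)
  have mem_𝓑 {T : End K V} (hT : T ∈ 𝓐) : T.domRestrict U ∈ 𝓑 := Submodule.mem_map_of_mem hT
  obtain ⟨u, hu⟩ : ∃ u : τ → U, Function.Injective (evalSum 𝓑 u) := by
    refine exists_injective_evalSum 𝓑 ?_
    rintro _ ⟨T, hT, rfl⟩ hT0
    calc finrank K 𝓑 * Fintype.card τ ≤ finrank K 𝓐 * Fintype.card τ :=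
          Nat.mul_le_mul_right _ (Submodule.finrank_map_le _ _)
      _ ≤ finrank K (U.map T) := (h_rank T hT hT0).le
      _ = finrank K (LinearMap.range (T.domRestrict U)) := by rw [LinearMap.range_domRestrict]
  obtain ⟨ρ, hρ⟩ := exists_representation_extending hu (permFunRep K 𝓑 τ)
  refine ⟨fun t => u t, ρ, ?_, fun σ T hT t => ?_⟩
  · refine linearIndependent_of_injective_evalSum hu (mem_𝓑 h_one) fun h_zero => hU ?_
    exact (Submodule.eq_bot_iff U).2 fun x hx => LinearMap.congr_fun h_zero ⟨x, hx⟩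
  · have := hρ σ (Pi.single t ⟨_, mem_𝓑 hT⟩)
    rwa [permFunRep_single, evalSum_single, evalSum_single] at this

-- Permuting two copies of `α` simultaneously makes every determinant equal to `1`.
theorem exists_hom_specialLinearGroup_perm [Finite K] {m α : Type*} [Fintype m] [DecidableEq m]
    [Fintype α] {S : Finset (Matrix.SpecialLinearGroup m K)} (h_one : 1 ∈ S)
    (h : S.card ^ 2 * (2 * Fintype.card α) < Fintype.card m) :
    ∃ (u : α → m → K) (θ : Perm α →* Matrix.SpecialLinearGroup m K), LinearIndependent K u ∧
      ∀ σ, ∀ g ∈ S, ∀ a, θ σ • g • u a = g • u (σ a) := by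
  classical
  let toEnd := DistribMulAction.toModuleEnd K (S := Matrix.SpecialLinearGroup m K) (m → K)
  let 𝓐 : Submodule K (End K (m → K)) := Submodule.span K (S.image toEnd)
  have mem_𝓐 {g} (hg : g ∈ S) : toEnd g ∈ 𝓐 :=
    Submodule.subset_span (Finset.mem_image_of_mem toEnd hg)
  have h_finrank : finrank K 𝓐 ≤ S.card :=
    (finrank_span_finset_le_card _).trans Finset.card_image_le
  obtain ⟨u, ρ, hu, hρ⟩ := exists_representation_perm (τ := α ⊕ α)
    (map_one toEnd ▸ mem_𝓐 h_one) <| by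
      rw [Fintype.card_sum, ← two_mul, finrank_fintype_fun_eq_card]
      exact (Nat.mul_le_mul_right _ (Nat.pow_le_pow_left h_finrank 2)).trans_lt h
  let ρ' := ρ.comp (permDouble α)
  have h_det (σ : Perm α) : (LinearMap.toMatrix' (ρ' σ)).det = 1 := by
    rw [LinearMap.det_toMatrix']
    exact DFunLike.congr_fun (comp_permDouble_eq_one (LinearMap.det.comp ρ)) σ
  let θ : Perm α →* Matrix.SpecialLinearGroup m K :=
    { toFun := fun σ => ⟨LinearMap.toMatrix' (ρ' σ), h_det σ⟩
      map_one' := Subtype.ext (by simp)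
      map_mul' := fun σ σ' => Subtype.ext <|
        (congrArg LinearMap.toMatrix' (map_mul ρ' σ σ')).trans (LinearMap.toMatrix'_mul _ _) }
  have θ_smul (σ : Perm α) (v : m → K) : θ σ • v = ρ' σ v := LinearMap.toMatrix'_mulVec _ v
  refine ⟨fun a => u (Sum.inl a), θ, hu.comp _ Sum.inl_injective, fun σ g hg a => ?_⟩
  rw [θ_smul]
  exact hρ (permDouble α σ) (toEnd g) (mem_𝓐 hg) (Sum.inl a)

end Representations

section Words

variable {F G : Type*} [Monoid F] [Monoid G]

/-- The value at `φ` of the word with constants `g₁ c₁ ⋯ gₗ cₗ` in `F ∗ G`, encoded as the list of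
the pairs `(gᵢ, cᵢ)`. In particular `evalWord 1 w` is the product of the constants. -/
def evalWord (φ : F →* G) (w : List (F × G)) : G :=
  (w.map fun x => φ x.1 * x.2).prod

/-- The content of a word with constants, that is, its image under the projection `F ∗ G → F`. -/
def content (w : List (F × G)) : F :=
  (w.map Prod.fst).prod

theorem evalWord_comp_smul {P E τ : Type*} [Monoid P] [MulAction P τ] [MulAction G E]
    (θ : P →* G) (s : F →* P) {u : τ → E} {w : List (F × G)}
    (h : ∀ w', w' <:+ w → ∀ p t, θ p • evalWord (1 : F →* G) w' • u t =
      evalWord (1 : F →* G) w' • u (p • t)) (t : τ) :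
    evalWord (θ.comp s) w • u t = evalWord (1 : F →* G) w • u (s (content w) • t) := by
  induction w with
  | nil => simp [evalWord, content]
  | cons x w ih =>
    have ih := ih fun w' hw' => h w' (hw'.trans (List.suffix_cons x w))
    have h_cons := h (x :: w) List.suffix_rfl (s x.1) (s (content w) • t)
    simp only [evalWord, content, List.map_cons, List.prod_cons, map_mul, mul_smul,
      MonoidHom.one_apply, one_smul, MonoidHom.comp_apply] at ih h_cons ⊢
    rw [ih, h_cons]

end Words

section MixedIdentities

open Matrix
open scoped LinearAlgebra.Projectivization

variable {K m X : Type*} [Field K] [Fintype m] [DecidableEq m] [DecidableEq X]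

theorem norm_prod_le_sum (L : List (FreeGroup X)) : L.prod.norm ≤ (L.map FreeGroup.norm).sum := by
  induction L with
  | nil => simp
  | cons g L ih =>
    rw [List.prod_cons, List.map_cons, List.sum_cons]
    exact (FreeGroup.norm_mul_le _ _).trans (Nat.add_le_add_left ih _)

theorem smul_projectivization_of_mk_eq_one {g : SpecialLinearGroup m K}
    (hg : (g : ProjectiveSpecialLinearGroup m K) = 1) (p : ℙ K (m → K)) : g • p = p := by
  rw [← ProjectiveSpecialLinearGroup.smul_proj_mk]
  exact (congrArg (· • p) hg).trans (one_smul _ p)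

theorem card_le_of_evalWord_smul_projectivization [Finite K]
    {w : List (FreeGroup X × SpecialLinearGroup m K)} (hw : content w ≠ 1)
    (c : SpecialLinearGroup m K)
    (h : ∀ (φ : FreeGroup X →* SpecialLinearGroup m K) (p : ℙ K (m → K)),
      (c * evalWord φ w) • p = p) :
    Fintype.card m ≤ (w.length + 1) ^ 2 * (2 * ((content w).norm + 1)) := by
  classical
  by_contra! h_lt
  obtain ⟨α, hα, s, hs⟩ := exists_hom_perm_ne_one hw
  obtain ⟨a, ha⟩ : ∃ a, s (content w) a ≠ a := by
    by_contra! h_fix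
    exact hs (Equiv.ext h_fix)
  let S : Finset (SpecialLinearGroup m K) := (w.tails.map (evalWord 1)).toFinset
  have suffix_mem {w'} (hw' : w' <:+ w) : evalWord 1 w' ∈ S :=
    List.mem_toFinset.2 (List.mem_map_of_mem ((List.mem_tails _ _).2 hw'))
  have hS : S.card ≤ w.length + 1 := by
    simpa using List.toFinset_card_le (w.tails.map (evalWord 1))
  obtain ⟨u, θ, hu, hθ⟩ := exists_hom_specialLinearGroup_perm (S := S) (α := α)
    (suffix_mem List.nil_suffix) <| by
      rw [Fintype.card_coe]
      exact lt_of_le_of_lt (by gcongr) h_lt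
  let q (a : α) : ℙ K (m → K) := .mk K (u a) (hu.ne_zero a)
  have h_act : evalWord (θ.comp s) w • q a = evalWord 1 w • q (s (content w) a) := by
    have := evalWord_comp_smul θ s (fun w' hw' σ a => hθ σ _ (suffix_mem hw') a) a
    simp only [q, Projectivization.smul_mk, this]
    rfl
  have h_line : q a = q (s (content w) a) :=
    calc q a = (c * evalWord (θ.comp s) w) • q a := (h _ _).symm
      _ = (c * evalWord 1 w) • q (s (content w) a) := by rw [mul_smul, h_act, ← mul_smul]
      _ = q (s (content w) a) := h _ _
  obtain ⟨k, hk⟩ := (Projectivization.mk_eq_mk_iff' ..).1 h_line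
  exact ha (hu.eq_of_smul_apply_eq_smul_apply 1 k _ _ one_ne_zero (by rw [one_smul, hk])).symm

end MixedIdentities

theorem log_le_four_mul {n l : ℕ} (hn : 2 < n) (h : n ≤ 2 * (l + 1) ^ 3) :
    Real.log n ≤ 4 * l := by
  have hl : 1 ≤ l := by
    by_contra! hl
    rw [Nat.lt_one_iff.1 hl] at h
    lia
  have h_two : (2 : ℝ) ≤ Real.exp l := by
    have := Real.add_one_le_exp (l : ℝ)
    have : (1 : ℝ) ≤ l := by exact_mod_cast hl
    linarith
  rw [Real.log_le_iff_le_exp (by positivity)]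
  calc (n : ℝ) ≤ 2 * (l + 1) ^ 3 := by exact_mod_cast h
    _ ≤ Real.exp l * Real.exp l ^ 3 := by
        gcongr
        exact Real.add_one_le_exp _
    _ = Real.exp (4 * l) := by rw [← pow_succ', ← Real.exp_nat_mul]; norm_num

theorem one_le_log_log {x : ℝ} (hx : 27 ≤ x) : 1 ≤ Real.log (Real.log x) := by
  have h_exp_three : Real.exp 3 ≤ 27 := by
    calc Real.exp 3 = Real.exp 1 ^ 3 := by rw [← Real.exp_nat_mul]; norm_num
      _ ≤ 3 ^ 3 := by gcongr; linarith [Real.exp_one_lt_d9]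
      _ = 27 := by norm_num
  have h_log : 3 ≤ Real.log x := (Real.le_log_iff_exp_le (by linarith)).2 (h_exp_three.trans hx)
  rw [Real.le_log_iff_exp_le (by linarith)]
  linarith [Real.exp_one_lt_d9]

end MixedIdentity

open Matrix MixedIdentity in
theorem length_nonsingular_mixed_identity_PSL_general {K m X : Type*} [Field K] [Finite K]
    [Fintype m] [DecidableEq m] {l : ℕ} (ι : Fin l → X) (ε : Fin l → ℤ)
    (hε : ∀ j, ε j = 1 ∨ ε j = -1)
    (c : Fin (l + 1) → SpecialLinearGroup m K ⧸ Subgroup.center (SpecialLinearGroup m K))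
    (hne : (List.ofFn fun j => FreeGroup.of (ι j) ^ ε j).prod ≠ 1)
    (hid : ∀ h : X → SpecialLinearGroup m K ⧸ Subgroup.center (SpecialLinearGroup m K),
      c 0 * (List.ofFn fun j => h (ι j) ^ ε j * c j.succ).prod = 1) :
    Fintype.card m ≤ 2 * (l + 1) ^ 3 := by
  classical
  choose C hC using fun j => QuotientGroup.mk_surjective (c j)
  let w := List.ofFn fun j => (FreeGroup.of (ι j) ^ ε j, C j.succ)
  have hw : content w = (List.ofFn fun j => FreeGroup.of (ι j) ^ ε j).prod := by
    simp only [content, w, List.map_ofFn]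
    rfl
  have h_norm : (content w).norm ≤ l := by
    rw [hw]
    refine (norm_prod_le_sum _).trans ?_
    rw [List.map_ofFn, List.sum_ofFn]
    have h_letter (j : Fin l) : (FreeGroup.of (ι j) ^ ε j).norm = 1 := by
      rcases hε j with hj | hj <;> simp [hj]
    simp [h_letter]
  have h_one (φ : FreeGroup X →* SpecialLinearGroup m K) :
      QuotientGroup.mk' (Subgroup.center _) (C 0 * evalWord φ w) = 1 := by
    rw [← hid fun x => QuotientGroup.mk' _ (φ (.of x)), evalWord, map_mul, map_list_prod]
    simp [w, List.map_ofFn, hC, Function.comp_def]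
  calc Fintype.card m ≤ (w.length + 1) ^ 2 * (2 * ((content w).norm + 1)) :=
        card_le_of_evalWord_smul_projectivization (hw ▸ hne) (C 0) fun φ p =>
          smul_projectivization_of_mk_eq_one (h_one φ) p
    _ ≤ (l + 1) ^ 2 * (2 * (l + 1)) := by
        rw [show w.length = l from List.length_ofFn]
        gcongr
    _ = 2 * (l + 1) ^ 3 := by ring

/-- Lower bound on the length of non-singular mixed identities for `PSL_n(q)`:
there is an absolute constant `C > 0` such that for all large `n` and every finite field,
any word with constants of length `l` in `PSL_n(q) ∗ F_r` with non-trivial content which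
vanishes identically on `PSL_n(q)` satisfies `l ≥ C·log n / log log n`. -/
theorem length_nonsingular_mixed_identity_PSL :
    ∃ C : ℝ, 0 < C ∧ ∃ N : ℕ, ∀ (K : Type) [Field K] [Fintype K], ∀ n : ℕ, N ≤ n →
      ∀ (r l : ℕ) (ι : Fin l → Fin r) (ε : Fin l → ℤ),
        (∀ j, ε j = 1 ∨ ε j = -1) →
        ∀ c : Fin (l + 1) →
          Matrix.SpecialLinearGroup (Fin n) K ⧸
            Subgroup.center (Matrix.SpecialLinearGroup (Fin n) K),
        -- non-singular: the content of the word is non-trivial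
        (List.ofFn (fun j : Fin l => (FreeGroup.of (ι j)) ^ (ε j))).prod ≠ 1 →
        -- mixed identity: the word vanishes identically
        (∀ h : Fin r →
            Matrix.SpecialLinearGroup (Fin n) K ⧸
              Subgroup.center (Matrix.SpecialLinearGroup (Fin n) K),
          c 0 * (List.ofFn (fun j : Fin l => (h (ι j)) ^ (ε j) * c j.succ)).prod = 1) →
        C * Real.log n / Real.log (Real.log n) ≤ l := by
  refine ⟨1 / 4, by norm_num, 27, fun K _ _ n hn r l ι ε hε c hne hid => ?_⟩
  have h_card : n ≤ 2 * (l + 1) ^ 3 := by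
    simpa using length_nonsingular_mixed_identity_PSL_general ι ε hε c hne hid
  calc 1 / 4 * Real.log n / Real.log (Real.log n) ≤ 1 / 4 * Real.log n :=
        div_le_self (by positivity) (MixedIdentity.one_le_log_log (by exact_mod_cast hn))
    _ ≤ l := by linarith [MixedIdentity.log_le_four_mul (by lia) h_card]
end

section
/- Let V be a countably infinite dimensional vector space over a finite field F_q, let k ≥ 3, and let H ≤ GL(V) be linearly k-transitive. Suppose H contains a non-scalar element c of projective rank 0 < ‖c‖ < k/2. Then the normal closure of c in H is contained in H ∩ GL_fin(V), is locally finite, and is linearly (⌈k/2⌉ − 1)-transitive. -/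
/-!
Restrict the normal closure `N` of `c` to a subspace `W` of dimension `k` containing the range of
`c - μ`. By `k`-transitivity all of `GL(W)` is induced by the ambient group, so the automorphisms
of `W` induced by `N` form a normal subgroup. It contains the non-scalar restriction of `c`, and as
`dim W ≥ 3`, commutators of a non-scalar element with transvections produce first a transvection and
then all of them; by transitivity the same holds for every `k`-dimensional `W`. Transvections
move any `a ∉ U` to any `b ∉ U` while fixing `U` pointwise when `dim U ≤ k - 2`, so tuples of fewer
than `k` independent vectors can be matched one vector at a time.

For local finiteness, finitely many finite-rank perturbations of scalars are all scalar on a common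
subspace of finite codimension and modulo a common finite-dimensional subspace. Over a finite field
only finitely many endomorphisms are of this form, and they contain the generated subgroup.
-/

section Functionals

variable {K W : Type*} [Field K] [AddCommGroup W] [Module K W]

open Module Submodule

lemma exists_ne_zero_apply_eq_zero_of_three_le_rank (hW : 3 ≤ Module.rank K W)
    (φ ψ : Dual K W) : ∃ x ≠ 0, φ x = 0 ∧ ψ x = 0 := by
  by_contra! h
  have hinj : Function.Injective (φ.prod ψ) :=
    (injective_iff_map_eq_zero _).2 fun x hx ↦ by
      by_contra hx0
      exact h x hx0 congr(($hx).1) congr(($hx).2)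
  have hle := Cardinal.lift_le.2 hW |>.trans (LinearMap.lift_rank_le_of_injective _ hinj)
  rw [rank_prod', rank_self, Cardinal.lift_add, Cardinal.lift_one, Cardinal.lift_ofNat,
    one_add_one_eq_two] at hle
  exact absurd hle (by norm_num)

lemma exists_dual_ne_zero_of_three_le_rank (hW : 3 ≤ Module.rank K W) (v w : W) :
    ∃ ψ : Dual K W, ψ ≠ 0 ∧ ψ v = 0 ∧ ψ w = 0 := by
  have hlt : span K {v, w} < ⊤ := lt_top_iff_ne_top.2 fun htop ↦ by
    have hle : Module.rank K W ≤ 2 :=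
      calc Module.rank K W = Module.rank K (span K {v, w}) := by rw [htop, rank_top]
        _ ≤ Cardinal.mk ({v, w} : Set W) := rank_span_le _
        _ ≤ Cardinal.mk ({w} : Set W) + 1 := Cardinal.mk_insert_le
        _ = 2 := by rw [Cardinal.mk_singleton, one_add_one_eq_two]
    exact absurd (hW.trans hle) (by norm_num)
  obtain ⟨ψ, hψ, hker⟩ := exists_le_ker_of_lt_top _ hlt
  exact ⟨ψ, hψ, hker (subset_span (by simp)), hker (subset_span (by simp))⟩

lemma exists_apply_ne_zero_and_apply_ne_zero {φ ψ : Dual K W} (hφ : φ ≠ 0) (hψ : ψ ≠ 0) :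
    ∃ x, φ x ≠ 0 ∧ ψ x ≠ 0 := by
  obtain ⟨x, hx⟩ := DFunLike.ne_iff.1 hφ
  obtain ⟨y, hy⟩ := DFunLike.ne_iff.1 hψ
  by_cases hψx : ψ x = 0
  · by_cases hφy : φ y = 0
    · exact ⟨x + y, by simpa [hφy] using hx, by simpa [hψx] using hy⟩
    · exact ⟨y, hφy, hy⟩
  · exact ⟨x, hx, hψx⟩

lemma mem_sup_span_singleton_exchange_s16 {U : Submodule K W} {a b : W} (h : a ∈ U ⊔ K ∙ b)
    (ha : a ∉ U) : b ∈ U ⊔ K ∙ a := by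
  rw [← span_eq U, ← span_union, Set.union_singleton] at h ⊢
  exact mem_span_insert_exchange h (by rwa [span_eq])

lemma exists_dual_eq_one_and_eq_one {U : Submodule K W} {a b : W} (ha : a ∉ U)
    (hb : b ∉ U ⊔ K ∙ a) : ∃ θ : Dual K W, U ≤ LinearMap.ker θ ∧ θ a = 1 ∧ θ b = 1 := by
  have ha' : a ∉ U ⊔ K ∙ (b - a) := fun h ↦ hb <| by
    simpa using add_mem (mem_sup_span_singleton_exchange_s16 h ha)
      (mem_sup_right (mem_span_singleton_self a))
  obtain ⟨θ, hθ, hθa⟩ := LinearMap.exists_extend_of_notMem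
    (0 : ↥(U ⊔ K ∙ (b - a)) →ₗ[K] K) ha' 1
  have hker (x) (hx : x ∈ U ⊔ K ∙ (b - a)) : θ x = 0 := congr($hθ ⟨x, hx⟩)
  refine ⟨θ, fun x hx ↦ hker x (mem_sup_left hx), hθa, ?_⟩
  rw [← hθa, ← sub_eq_zero, ← map_sub]
  exact hker _ (mem_sup_right (mem_span_singleton_self _))

end Functionals

section Transvections

variable {K W : Type*} [Field K] [AddCommGroup W] [Module K W] {P : Subgroup (W ≃ₗ[K] W)}

open Module Submodule
open LinearEquiv (transvection transvections)

lemma mul_transvection_mul_inv (e : W ≃ₗ[K] W) {φ ψ : Dual K W} {a b : W} (hφ : φ a = 0)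
    (hψ : ψ b = 0) (hφψ : ∀ x, ψ (e x) = φ x) (hab : e a = b) :
    e * transvection hφ * e⁻¹ = transvection hψ := by
  rw [mul_inv_eq_iff_eq_mul]
  ext x
  simp [LinearMap.transvection.apply, hφψ, hab]

lemma transvection_mem_of_conj [P.Normal] (e : W ≃ₗ[K] W) {φ ψ : Dual K W} {a b : W}
    {hφ : φ a = 0} (hmem : transvection hφ ∈ P) (hψ : ψ b = 0) (hφψ : ∀ x, ψ (e x) = φ x)
    (hab : e a = b) : transvection hψ ∈ P :=
  mul_transvection_mul_inv e hφ hψ hφψ hab ▸ Subgroup.Normal.conj_mem ‹_› _ hmem e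

lemma transvection_mem_of_mem_of_apply_eq_zero [P.Normal] (hW : 3 ≤ Module.rank K W)
    {φ : Dual K W} {a b : W} (ha : a ≠ 0) {hφa : φ a = 0} (hmem : transvection hφa ∈ P)
    (hφb : φ b = 0) : transvection hφb ∈ P := by
  have off_span {d : W} (hφd : φ d = 0) (hd : d ∉ K ∙ a) : transvection hφd ∈ P := by
    obtain ⟨θ, -, hθa, hθd⟩ := exists_dual_eq_one_and_eq_one (U := (⊥ : Submodule K W))
      (by simpa using ha) (by simpa using hd)
    have hθ : θ (d - a) = 0 := by rw [map_sub, hθa, hθd, sub_self]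
    exact transvection_mem_of_conj (transvection hθ) hmem hφd
      (fun x ↦ by simp [LinearMap.transvection.apply, hφa, hφd])
      (by simp [LinearMap.transvection.apply, hθa])
  by_cases hb : b ∈ K ∙ a
  · obtain ⟨θ, hθa⟩ := Projective.exists_dual_eq_one K ha
    obtain ⟨d, hd0, hφd, hθd⟩ := exists_ne_zero_apply_eq_zero_of_three_le_rank hW φ θ
    have hd : d ∉ K ∙ a := fun h ↦ by
      obtain ⟨l, rfl⟩ := mem_span_singleton.1 h
      simp_all
    have hφbd : φ (b - d) = 0 := by rw [map_sub, hφb, hφd, sub_self]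
    have hbd : b - d ∉ K ∙ a := fun h ↦ hd (by simpa using sub_mem hb h)
    have hadd := mul_mem (off_span hφbd hbd) (off_span hφd hd)
    rw [LinearEquiv.mul_eq_trans, LinearEquiv.transvection.trans_of_left_eq hφbd hφd
      (by rwa [sub_add_cancel])] at hadd
    simpa only [sub_add_cancel] using hadd
  · exact off_span hφb hb

lemma transvections_subset_of_transvection_mem [P.Normal] (hW : 3 ≤ Module.rank K W)
    {φ : Dual K W} {a : W} (hφ : φ ≠ 0) (ha : a ≠ 0) {hφa : φ a = 0}
    (hmem : transvection hφa ∈ P) : transvections K W ⊆ P := by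
  rintro _ ⟨ψ, b, hψb, rfl⟩
  obtain rfl | hψ := eq_or_ne ψ 0
  · rw [LinearEquiv.transvection.of_left_eq_zero]
    exact one_mem P
  obtain ⟨d, hφd, hψd⟩ := exists_apply_ne_zero_and_apply_ne_zero hφ hψ
  let χ : Dual K W := (φ d)⁻¹ • φ - (ψ d)⁻¹ • ψ
  have hχ : χ d = 0 := by simp [χ, hφd, hψd]
  let e := transvection hχ
  have hψe (x) : ψ (e x) = (ψ d / φ d) * φ x := by
    have hx : e x = x + ((φ d)⁻¹ * φ x - (ψ d)⁻¹ * ψ x) • d := rfl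
    rw [hx, map_add, map_smul, smul_eq_mul]
    field_simp
    ring
  have hψea : ψ (e a) = 0 := by rw [hψe, hφa, mul_zero]
  have hφca : φ ((ψ d / φ d) • a) = 0 := by rw [map_smul, hφa, smul_zero]
  have hcφa : ((ψ d / φ d) • φ) a = 0 := by rw [LinearMap.smul_apply, hφa, smul_zero]
  have hcomm : transvection hφca = transvection hcφa := by
    ext x
    simp [LinearMap.transvection.apply, mul_smul, smul_comm (φ x)]
  have hmem' : transvection hcφa ∈ P :=
    hcomm ▸ transvection_mem_of_mem_of_apply_eq_zero hW ha hmem hφca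
  exact transvection_mem_of_mem_of_apply_eq_zero hW (e.map_ne_zero_iff.2 ha)
    (transvection_mem_of_conj e hmem' hψea hψe rfl) hψb

lemma transvections_subset_of_apply_eq [P.Normal] (hW : 3 ≤ Module.rank K W)
    {s : W ≃ₗ[K] W} (hs : s ∈ P) (hs1 : s ≠ 1) {ψ : Dual K W} (hψ : ψ ≠ 0)
    (hψs : ∀ x, ψ (s x) = ψ x) : transvections K W ⊆ P := by
  -- Either `s` is a transvection, or its commutator with a transvection by `ψ` is one.
  by_cases hfix : ∀ a, ψ a = 0 → s a = a
  · obtain ⟨x₀, hx₀⟩ := LinearMap.surjective hψ 1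
    have hψa : ψ (s x₀ - x₀) = 0 := by rw [map_sub, hψs, sub_self]
    have hst : s = transvection hψa := by
      ext x
      have := hfix (x - ψ x • x₀) (by simp [hx₀])
      rw [map_sub, map_smul, sub_eq_iff_eq_add] at this
      rw [this, LinearEquiv.transvection.apply]
      module
    refine transvections_subset_of_transvection_mem hW hψ (fun ha ↦ hs1 ?_) (hst ▸ hs)
    ext x
    rw [hst, LinearEquiv.transvection.apply, ha, smul_zero, add_zero, LinearEquiv.coe_one, id]
  · push Not at hfix
    obtain ⟨a, hψa, hsa⟩ := hfix
    have hψsa : ψ (s a) = 0 := by rw [hψs, hψa]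
    have hψna : ψ (-a) = 0 := by rw [map_neg, hψa, neg_zero]
    have hψd : ψ (s a + -a) = 0 := by rw [map_add, hψsa, hψna, add_zero]
    have hcomm := mul_mem hs (Subgroup.Normal.conj_mem ‹_› _ (inv_mem hs) (transvection hψa))
    rw [← mul_assoc, ← mul_assoc, mul_transvection_mul_inv s hψa hψsa hψs rfl,
      LinearEquiv.transvection.inv_eq hψa hψna, LinearEquiv.mul_eq_trans,
      LinearEquiv.transvection.trans_of_left_eq hψsa hψna hψd] at hcomm
    exact transvections_subset_of_transvection_mem hW hψ (by rwa [← sub_eq_add_neg, sub_ne_zero])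
      hcomm

lemma transvections_subset_of_linearIndependent [P.Normal] (hW : 3 ≤ Module.rank K W)
    {g : W ≃ₗ[K] W} (hg : g ∈ P) {v : W} (hv : LinearIndependent K ![v, g v]) :
    transvections K W ⊆ P := by
  obtain ⟨ψ, hψ, hψv, hψgv⟩ := exists_dual_ne_zero_of_three_le_rank hW v (g v)
  let t := transvection hψv
  -- The commutator of `g` and `t` preserves `ψ`, which vanishes on both `v` and `g v`.
  refine transvections_subset_of_apply_eq hW (s := g * (t * g⁻¹ * t⁻¹))
    (mul_mem hg (Subgroup.Normal.conj_mem ‹_› _ (inv_mem hg) t)) (fun h ↦ ?_) hψ fun x ↦ ?_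
  · obtain ⟨x, hx⟩ := LinearMap.surjective hψ 1
    have hgt : g (t x) = t (g x) := by
      rw [← mul_assoc, ← mul_assoc, mul_inv_eq_one, mul_inv_eq_iff_eq_mul] at h
      exact congr($h x)
    have hrel : g v = ψ (g x) • v := by simpa [t, LinearMap.transvection.apply, hx] using hgt
    have := LinearIndependent.pair_iff.1 hv (ψ (g x)) (-1) (by rw [hrel]; module)
    exact neg_ne_zero.2 one_ne_zero this.2
  · simp [t, LinearMap.transvection.apply, hψv, hψgv, LinearEquiv.transvection.inv_eq]

lemma exists_mem_fixing_of_transvections_subset (hP : transvections K W ⊆ P)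
    {U : Submodule K W} {a b : W} (ha : a ∉ U) (hb : b ∉ U) (hU : U ⊔ K ∙ a ≠ ⊤) :
    ∃ p ∈ P, (∀ u ∈ U, p u = u) ∧ p a = b := by
  have off_span {x y : W} (hx : x ∉ U) (hy : y ∉ U ⊔ K ∙ x) :
      ∃ p ∈ P, (∀ u ∈ U, p u = u) ∧ p x = y := by
    obtain ⟨θ, hUθ, hθx, hθy⟩ := exists_dual_eq_one_and_eq_one hx hy
    have hθ : θ (y - x) = 0 := by rw [map_sub, hθx, hθy, sub_self]
    refine ⟨transvection hθ, hP ⟨θ, _, hθ, rfl⟩, fun u hu ↦ ?_, ?_⟩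
    · simp [LinearMap.transvection.apply, LinearMap.mem_ker.1 (hUθ hu)]
    · simp [LinearMap.transvection.apply, hθx]
  by_cases hba : b ∈ U ⊔ K ∙ a
  · obtain ⟨c, -, hc⟩ := SetLike.exists_of_lt hU.lt_top
    have hbc : b ∉ U ⊔ K ∙ c := fun h ↦ hc <|
      sup_le le_sup_left ((span_singleton_le_iff_mem _ _).2 hba)
        (mem_sup_span_singleton_exchange_s16 h hb)
    obtain ⟨p, hp, hpU, rfl⟩ := off_span ha hc
    obtain ⟨q, hq, hqU, rfl⟩ := off_span (fun h ↦ hc (mem_sup_left h)) hbc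
    exact ⟨q * p, mul_mem hq hp, fun u hu ↦ by
      rw [LinearEquiv.mul_apply, hpU u hu, hqU u hu], rfl⟩
  · exact off_span ha hba

end Transvections

section Extension

variable {K V : Type*} [Field K] [AddCommGroup V] [Module K V]

open Module Submodule

lemma finrank_sup_span_singleton_le_s16 (S : Submodule K V) [Module.Finite K S] (v : V) :
    finrank K ↥(S ⊔ K ∙ v) ≤ finrank K S + 1 :=
  calc finrank K ↥(S ⊔ K ∙ v) ≤ finrank K S + finrank K (K ∙ v) :=
        finrank_add_le_finrank_add_finrank S (K ∙ v)
    _ ≤ finrank K S + 1 := by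
        gcongr
        simpa using finrank_span_le_card (R := K) {v}

lemma exists_le_finrank_eq {S : Submodule K V} [Module.Finite K S] {k : ℕ} (hS : finrank K S ≤ k)
    (hk : k ≤ Module.rank K V) :
    ∃ W : Submodule K V, S ≤ W ∧ Module.Finite K W ∧ finrank K W = k := by
  induction k, hS using Nat.le_induction with
  | base => exact ⟨S, le_rfl, ‹_›, rfl⟩
  | succ k _ ih =>
    have hlt : (k : Cardinal) < Module.rank K V :=
      lt_of_lt_of_le (by exact_mod_cast k.lt_succ_self) hk
    obtain ⟨W, hSW, hfin, hW⟩ := ih hlt.le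
    have hWtop : W < ⊤ := lt_top_iff_ne_top.2 fun htop ↦ by
      rw [← rank_top, ← htop, ← finrank_eq_rank, hW] at hlt
      exact hlt.false
    obtain ⟨v, -, hv⟩ := SetLike.exists_of_lt hWtop
    have hv0 : v ≠ 0 := fun h ↦ hv (h ▸ W.zero_mem)
    have hdisj : W ⊓ K ∙ v = ⊥ := (disjoint_span_singleton_of_notMem hv).eq_bot
    have hsum := finrank_sup_add_finrank_inf_eq W (K ∙ v)
    rw [hdisj, finrank_bot, finrank_span_singleton hv0, hW, add_zero] at hsum
    exact ⟨W ⊔ K ∙ v, hSW.trans le_sup_left, inferInstance, hsum⟩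

end Extension

section LinearTransitivity

variable {K V G : Type*} [Field K] [AddCommGroup V] [Module K V] [Group G]
  {ρ : Representation K G V} {N : Subgroup G} {k : ℕ}

open Module Submodule

/-- A linear representation of `G` on `V` is linearly `n`-transitive if `G` acts transitively on
the linearly independent `n`-tuples of vectors of `V`. -/
def IsLinearlyTransitive (ρ : Representation K G V) (n : ℕ) : Prop :=
  ∀ u w : Fin n → V, LinearIndependent K u → LinearIndependent K w → ∃ g, ∀ i, ρ g (u i) = w i

lemma IsLinearlyTransitive.exists_apply_eq_linearEquiv (hρ : IsLinearlyTransitive ρ k)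
    {W W' : Submodule K V} [Module.Finite K W] (hW : finrank K W = k) (e : W ≃ₗ[K] W') :
    ∃ g, ∀ x : W, ρ g x = e x := by
  let b := finBasisOfFinrankEq K W hW
  obtain ⟨g, hg⟩ := hρ (fun i ↦ b i) (fun i ↦ e (b i))
    (b.linearIndependent.map' W.subtype W.ker_subtype)
    ((b.map e).linearIndependent.map' W'.subtype W'.ker_subtype)
  have heq : ρ g ∘ₗ W.subtype = W'.subtype ∘ₗ e.toLinearMap := b.ext hg
  exact ⟨g, fun x ↦ congr($heq x)⟩

lemma isLinearlyTransitive_of_exists_fixing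
    (h : ∀ (U : Submodule K V) [Module.Finite K U] (a b : V), finrank K U + 2 ≤ k →
      a ∉ U → b ∉ U → ∃ g, (∀ u ∈ U, ρ g u = u) ∧ ρ g a = b) {m : ℕ} (hm : m < k) :
    IsLinearlyTransitive ρ m := by
  induction m with
  | zero => exact fun _ _ _ _ ↦ ⟨1, fun i ↦ i.elim0⟩
  | succ m ih =>
    intro u w hu hw
    obtain ⟨g, hg⟩ := ih (by lia) (Fin.tail u) (Fin.tail w)
      (linearIndependent_finSucc.1 hu).1 (linearIndependent_finSucc.1 hw).1
    have hgu : LinearIndependent K (ρ g ∘ u) :=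
      hu.map' (ρ g) (LinearMap.ker_eq_bot.2 (ρ.apply_bijective g).injective)
    have htail : Fin.tail (ρ g ∘ u) = Fin.tail w := funext hg
    rw [linearIndependent_finSucc, htail] at hgu
    rw [linearIndependent_finSucc] at hw
    have : Module.Finite K (span K (Set.range (Fin.tail w))) :=
      .span_of_finite K (Set.finite_range _)
    obtain ⟨n, hn, hna⟩ := h (span K (Set.range (Fin.tail w))) _ _
      (by rw [finrank_span_eq_card hw.1, Fintype.card_fin]; lia) hgu.2 hw.2
    refine ⟨n * g, Fin.cases ?_ fun i ↦ ?_⟩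
    · rw [map_mul, Module.End.mul_apply, ← hna, Function.comp_apply]
    · rw [map_mul, Module.End.mul_apply]
      exact (congrArg _ (hg i)).trans (hn _ (subset_span ⟨i, rfl⟩))

/-- The group of automorphisms of a subspace `W` that are restrictions of elements of `N`. -/
def inducedSubgroup (ρ : Representation K G V) (N : Subgroup G) (W : Submodule K V) :
    Subgroup (W ≃ₗ[K] W) where
  carrier := {p | ∃ n ∈ N, ∀ x : W, ρ n x = p x}
  one_mem' := ⟨1, one_mem N, fun x ↦ by simp⟩
  mul_mem' := by
    rintro p q ⟨m, hm, hp⟩ ⟨n, hn, hq⟩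
    exact ⟨m * n, mul_mem hm hn, fun x ↦ by simp [hp, hq]⟩
  inv_mem' := by
    rintro p ⟨n, hn, hp⟩
    refine ⟨n⁻¹, inv_mem hn, fun x ↦ ?_⟩
    obtain ⟨y, rfl⟩ := p.surjective x
    simp [← hp]

lemma conj_mem_inducedSubgroup [N.Normal] {W W' : Submodule K V} {g : G} {e : W ≃ₗ[K] W'}
    (hg : ∀ x : W, ρ g x = e x) {p : W ≃ₗ[K] W} (hp : p ∈ inducedSubgroup ρ N W) :
    e.symm ≪≫ₗ p ≪≫ₗ e ∈ inducedSubgroup ρ N W' := by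
  obtain ⟨n, hn, hnp⟩ := hp
  refine ⟨g * n * g⁻¹, Subgroup.Normal.conj_mem ‹_› n hn g, fun y ↦ ?_⟩
  obtain ⟨x, rfl⟩ := e.surjective y
  simp [← hg, hnp]

lemma IsLinearlyTransitive.normal_inducedSubgroup (hρ : IsLinearlyTransitive ρ k) [N.Normal]
    {W : Submodule K V} [Module.Finite K W] (hW : finrank K W = k) :
    (inducedSubgroup ρ N W).Normal where
  conj_mem p hp q := by
    obtain ⟨g, hg⟩ := hρ.exists_apply_eq_linearEquiv hW q
    exact conj_mem_inducedSubgroup hg hp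

lemma exists_linearIndependent_pair_of_ne_smul {f : End K V} (hf : Function.Injective f)
    (hf' : ∀ μ : Kˣ, f ≠ (μ : K) • (1 : End K V)) : ∃ v, LinearIndependent K ![v, f v] := by
  by_contra! h
  obtain ⟨a, ha⟩ := LinearMap.exists_eq_smul_id_of_forall_notLinearIndependent h
  obtain rfl | ha0 := eq_or_ne a 0
  · have : Subsingleton V := ⟨fun x y ↦ hf (by simp [ha])⟩
    exact hf' 1 (Subsingleton.elim _ _)
  · exact hf' (Units.mk0 a ha0) ha

lemma exists_mem_inducedSubgroup_of_range_sub_smul_le {c : G} (hc : c ∈ N) {W : Submodule K V}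
    [Module.Finite K W] {μ : K} (hW : LinearMap.range (ρ c - μ • (1 : End K V)) ≤ W) :
    ∃ p ∈ inducedSubgroup ρ N W, ∀ x : W, ρ c x = p x := by
  have hmaps : ∀ x ∈ W, ρ c x ∈ W := fun x hx ↦ by
    simpa using add_mem (hW ⟨x, rfl⟩) (W.smul_mem μ hx)
  let p := LinearEquiv.ofInjectiveEndo ((ρ c).restrict hmaps) fun x y hxy ↦
    Subtype.ext ((ρ.apply_bijective c).injective congr(($hxy : V)))
  exact ⟨p, ⟨c, hc, fun x ↦ rfl⟩, fun x ↦ rfl⟩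

lemma IsLinearlyTransitive.transvections_subset_inducedSubgroup_of_mem
    (hρ : IsLinearlyTransitive ρ k) (hk : 3 ≤ k) [N.Normal] {W W' : Submodule K V}
    [Module.Finite K W] [Module.Finite K W'] (hW : finrank K W = k) (hW' : finrank K W' = k)
    {p : W ≃ₗ[K] W} (hp : p ∈ inducedSubgroup ρ N W) {v : W}
    (hv : LinearIndependent K ![v, p v]) :
    LinearEquiv.transvections K W' ⊆ inducedSubgroup ρ N W' := by
  let e : W ≃ₗ[K] W' := LinearEquiv.ofFinrankEq W W' (hW.trans hW'.symm)
  obtain ⟨g, hg⟩ := hρ.exists_apply_eq_linearEquiv hW e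
  have := hρ.normal_inducedSubgroup (N := N) hW'
  have hev : LinearIndependent K ![e v, (e.symm ≪≫ₗ p ≪≫ₗ e) (e v)] :=
    LinearIndependent.pair_iff.2 fun a b h ↦
      LinearIndependent.pair_iff.1 hv a b (e.injective (by simpa using h))
  refine transvections_subset_of_linearIndependent ?_ (conj_mem_inducedSubgroup hg hp) hev
  rw [← finrank_eq_rank, hW']
  exact_mod_cast hk

lemma IsLinearlyTransitive.transvections_subset_inducedSubgroup
    (hρ : IsLinearlyTransitive ρ k) (hk : 3 ≤ k) (hV : k ≤ Module.rank K V) [N.Normal] {c : G}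
    (hc : c ∈ N) (hc' : ∀ μ : Kˣ, ρ c ≠ (μ : K) • (1 : End K V)) {μ : K}
    (hfin : (ρ c - μ • (1 : End K V)).HasFiniteRange)
    (hrank : finrank K (LinearMap.range (ρ c - μ • (1 : End K V))) < k)
    {W : Submodule K V} [Module.Finite K W] (hW : finrank K W = k) :
    LinearEquiv.transvections K W ⊆ inducedSubgroup ρ N W := by
  obtain ⟨v, hv⟩ := exists_linearIndependent_pair_of_ne_smul (ρ.apply_bijective c).injective hc'
  have : Module.Finite K (LinearMap.range (ρ c - μ • (1 : End K V))) := Module.Finite.iff_fg.2 hfin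
  obtain ⟨W₀, hle, hW₀fin, hW₀⟩ :=
    exists_le_finrank_eq ((finrank_sup_span_singleton_le_s16 _ v).trans hrank) hV
  obtain ⟨p, hp, hcp⟩ := exists_mem_inducedSubgroup_of_range_sub_smul_le hc (le_sup_left.trans hle)
  let v₀ : W₀ := ⟨v, hle (mem_sup_right (mem_span_singleton_self v))⟩
  have hv₀ : LinearIndependent K ![v₀, p v₀] :=
    LinearIndependent.pair_iff.2 fun a b h ↦
      LinearIndependent.pair_iff.1 hv a b (by simpa [v₀, ← hcp] using congr(($h : V)))
  exact hρ.transvections_subset_inducedSubgroup_of_mem hk hW₀ hW hp hv₀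

lemma exists_mem_fixing_of_transvections_subset_inducedSubgroup
    (hV : k ≤ Module.rank K V)
    (hN : ∀ (W : Submodule K V) [Module.Finite K W], finrank K W = k →
      LinearEquiv.transvections K W ⊆ inducedSubgroup ρ N W)
    (U : Submodule K V) [Module.Finite K U] (a b : V) (hU : finrank K U + 2 ≤ k) (ha : a ∉ U)
    (hb : b ∉ U) : ∃ n ∈ N, (∀ u ∈ U, ρ n u = u) ∧ ρ n a = b := by
  obtain ⟨W, hle, hWfin, hW⟩ := exists_le_finrank_eq (S := U ⊔ K ∙ a ⊔ K ∙ b) (k := k)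
    (by grw [finrank_sup_span_singleton_le_s16, finrank_sup_span_singleton_le_s16, add_assoc, hU]) hV
  obtain ⟨⟨hUW, haW⟩, hbW⟩ : (U ≤ W ∧ a ∈ W) ∧ b ∈ W := by simpa using hle
  let U' := U.comap W.subtype
  have hU' : U' ⊔ K ∙ (⟨a, haW⟩ : W) ≠ ⊤ := fun htop ↦ by
    have := finrank_sup_span_singleton_le_s16 U' ⟨a, haW⟩
    rw [htop, finrank_top, (comapSubtypeEquivOfLe hUW).finrank_eq] at this
    lia
  obtain ⟨p, ⟨n, hn, hnp⟩, hpU, hpa⟩ := exists_mem_fixing_of_transvections_subset (hN W hW)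
    (U := U') (a := ⟨a, haW⟩) (b := ⟨b, hbW⟩) ha hb hU'
  refine ⟨n, hn, fun u hu ↦ ?_, ?_⟩
  · exact (hnp ⟨u, hUW hu⟩).trans congr(($(hpU ⟨u, hUW hu⟩ hu) : V))
  · exact (hnp ⟨a, haW⟩).trans congr(($hpa : V))

lemma IsLinearlyTransitive.comp_subtype_of_lt
    (hρ : IsLinearlyTransitive ρ k) (hk : 3 ≤ k) (hV : k ≤ Module.rank K V) [N.Normal] {c : G}
    (hc : c ∈ N) (hc' : ∀ μ : Kˣ, ρ c ≠ (μ : K) • (1 : End K V)) {μ : K}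
    (hfin : (ρ c - μ • (1 : End K V)).HasFiniteRange)
    (hrank : finrank K (LinearMap.range (ρ c - μ • (1 : End K V))) < k) {m : ℕ} (hm : m < k) :
    IsLinearlyTransitive (ρ.comp N.subtype) m := by
  refine isLinearlyTransitive_of_exists_fixing (fun U _ a b hU ha hb ↦ ?_) hm
  obtain ⟨n, hn, h⟩ := exists_mem_fixing_of_transvections_subset_inducedSubgroup hV
    (fun W _ hW ↦ hρ.transvections_subset_inducedSubgroup hk hV hc hc' hfin hrank hW) U a b hU ha hb
  exact ⟨⟨n, hn⟩, h⟩

end LinearTransitivity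

section FiniteProjectiveRank

variable {K V G : Type*} [Field K] [AddCommGroup V] [Module K V] [Group G]
  {ρ : Representation K G V}

open Module Submodule

/-- The subgroup `GL_fin(V)` of elements acting on `V` as a perturbation of a nonzero scalar by an
endomorphism of finite rank. -/
def finiteProjectiveRank (ρ : Representation K G V) : Subgroup G where
  carrier := {g | ∃ μ : Kˣ, (ρ g - (μ : K) • (1 : End K V)).HasFiniteRange}
  one_mem' := ⟨1, by simp⟩
  mul_mem' := by
    rintro g h ⟨μ, hg⟩ ⟨ν, hh⟩
    have heq : ρ (g * h) - ((μ * ν : Kˣ) : K) • (1 : End K V) =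
        ρ g ∘ₗ (ρ h - (ν : K) • 1) + (ν : K) • (ρ g - (μ : K) • 1) := by
      ext x
      simp [mul_smul, smul_sub, smul_comm (ν : K)]
    exact ⟨μ * ν, heq ▸ (hh.comp_left _).add (hg.smul _)⟩
  inv_mem' := by
    rintro g ⟨μ, hg⟩
    have heq : ρ g⁻¹ - ((μ⁻¹ : Kˣ) : K) • (1 : End K V) =
        (-((μ⁻¹ : Kˣ) : K)) • (ρ g⁻¹ ∘ₗ (ρ g - (μ : K) • 1)) := by
      ext x
      simp [smul_sub]
    exact ⟨μ⁻¹, heq ▸ (hg.comp_left _).smul _⟩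

instance normal_finiteProjectiveRank : (finiteProjectiveRank ρ).Normal where
  conj_mem := by
    rintro g ⟨μ, hg⟩ h
    have heq : ρ (h * g * h⁻¹) - (μ : K) • (1 : End K V) =
        ρ h ∘ₗ (ρ g - (μ : K) • 1) ∘ₗ ρ h⁻¹ := by
      ext x
      simp
    exact ⟨μ, heq ▸ (hg.comp_right _).comp_left _⟩

/-- The subgroup of elements which act as a nonzero scalar both on the subspace `U` and on the
quotient `V ⧸ R`, with the same scalar on both. -/
def commonScalarSubgroup (ρ : Representation K G V) (U R : Submodule K V) : Subgroup G where
  carrier := {g | ∃ μ : Kˣ, (∀ x ∈ U, ρ g x = μ • x) ∧ ∀ x, ρ g x - μ • x ∈ R}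
  one_mem' := ⟨1, by simp⟩
  mul_mem' := by
    rintro g h ⟨μ, hgU, hgR⟩ ⟨ν, hhU, hhR⟩
    refine ⟨μ * ν, fun x hx ↦ ?_, fun x ↦ ?_⟩
    · rw [map_mul, Module.End.mul_apply, hhU x hx, LinearMap.map_smul_of_tower, hgU x hx,
        smul_comm, mul_smul]
    · simpa [mul_smul, smul_sub] using add_mem (hgR (ρ h x)) (R.smul_of_tower_mem μ (hhR x))
  inv_mem' := by
    rintro g ⟨μ, hgU, hgR⟩
    refine ⟨μ⁻¹, fun x hx ↦ ?_, fun x ↦ ?_⟩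
    · rw [eq_inv_smul_iff, ← LinearMap.map_smul_of_tower, ← hgU x hx, Representation.inv_self_apply]
    · simpa [smul_sub, neg_add_eq_sub] using R.smul_of_tower_mem (-μ⁻¹) (hgR (ρ g⁻¹ x))

lemma commonScalarSubgroup_mono {U U' R R' : Submodule K V} (hU : U' ≤ U) (hR : R ≤ R') :
    commonScalarSubgroup ρ U R ≤ commonScalarSubgroup ρ U' R' :=
  fun _ ⟨μ, hgU, hgR⟩ ↦ ⟨μ, fun x hx ↦ hgU x (hU hx), fun x ↦ hR (hgR x)⟩

lemma finite_commonScalarSubgroup [Finite K] (hρ : Function.Injective ρ) {U R : Submodule K V}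
    (hU : U.CoFG) (hR : R.FG) : Finite (commonScalarSubgroup ρ U R) := by
  have : Module.Finite K R := Module.Finite.iff_fg.2 hR
  have : Module.Finite K (V ⧸ U) := hU
  have : Finite (V ⧸ U →ₗ[K] R) := Module.finite_of_finite K
  let perturb (p : Kˣ × (V ⧸ U →ₗ[K] R)) : End K V :=
    (p.1 : K) • 1 + R.subtype ∘ₗ p.2 ∘ₗ U.mkQ
  refine ((Set.finite_range perturb).preimage hρ.injOn).subset ?_
  rintro g ⟨μ, hgU, hgR⟩
  refine ⟨(μ, U.liftQ ((ρ g - (μ : K) • 1).codRestrict R hgR) fun x hx ↦ ?_), ?_⟩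
  · exact Subtype.ext (sub_eq_zero.2 (hgU x hx))
  · ext x
    exact add_sub_cancel (μ • x) (ρ g x)

lemma exists_mem_commonScalarSubgroup {g : G} (hg : g ∈ finiteProjectiveRank ρ) :
    ∃ U R : Submodule K V, U.CoFG ∧ R.FG ∧ g ∈ commonScalarSubgroup ρ U R := by
  obtain ⟨μ, hμ⟩ := hg
  exact ⟨_, _, hμ.cofg_ker, hμ.fg_range, μ, fun x hx ↦ sub_eq_zero.1 hx, fun x ↦ ⟨x, rfl⟩⟩

lemma exists_subset_commonScalarSubgroup {s : Set G} (hs : s.Finite)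
    (hfin : s ⊆ finiteProjectiveRank ρ) :
    ∃ U R : Submodule K V, U.CoFG ∧ R.FG ∧ s ⊆ commonScalarSubgroup ρ U R := by
  induction s, hs using Set.Finite.induction_on with
  | empty => exact ⟨⊤, ⊥, .top, fg_bot, Set.empty_subset _⟩
  | @insert g s _ _ ih =>
    obtain ⟨hg, hs⟩ := Set.insert_subset_iff.1 hfin
    obtain ⟨U, R, hU, hR, hmem⟩ := exists_mem_commonScalarSubgroup hg
    obtain ⟨U', R', hU', hR', hsub⟩ := ih hs
    exact ⟨U ⊓ U', R ⊔ R', hU.inf hU', hR.sup hR', Set.insert_subset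
      (commonScalarSubgroup_mono inf_le_left le_sup_left hmem)
      (hsub.trans (commonScalarSubgroup_mono inf_le_right le_sup_right))⟩

lemma finite_closure_of_subset_finiteProjectiveRank [Finite K] (hρ : Function.Injective ρ)
    {s : Set G} (hs : s.Finite) (hfin : s ⊆ finiteProjectiveRank ρ) :
    Finite (Subgroup.closure s) := by
  obtain ⟨U, R, hU, hR, hsub⟩ := exists_subset_commonScalarSubgroup hs hfin
  have := finite_commonScalarSubgroup hρ hU hR
  exact Finite.Set.subset _ ((Subgroup.closure_le _).2 hsub)

end FiniteProjectiveRank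

theorem normal_closure_of_small_element_general {K V G : Type*} [Field K] [AddCommGroup V]
    [Module K V] [Group G] {ρ : Representation K G V} {k : ℕ} (hk : 3 ≤ k)
    (hV : k ≤ Module.rank K V) (hρ : IsLinearlyTransitive ρ k) {c : G}
    (hnonscalar : ∀ μ : Kˣ, ρ c ≠ (μ : K) • (1 : Module.End K V))
    (hsmall : ∃ μ : Kˣ, (ρ c - (μ : K) • (1 : Module.End K V)).HasFiniteRange ∧
      Module.finrank K (LinearMap.range (ρ c - (μ : K) • (1 : Module.End K V))) < k) :
    Subgroup.normalClosure {c} ≤ finiteProjectiveRank ρ ∧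
    (Finite K → Function.Injective ρ → ∀ s : Set G, s.Finite → s ⊆ Subgroup.normalClosure {c} →
      Finite (Subgroup.closure s)) ∧
    ∀ m < k, IsLinearlyTransitive (ρ.comp (Subgroup.normalClosure {c}).subtype) m := by
  obtain ⟨μ, hfin, hrank⟩ := hsmall
  have hle : Subgroup.normalClosure {c} ≤ finiteProjectiveRank ρ :=
    Subgroup.normalClosure_le_normal (Set.singleton_subset_iff.2 ⟨μ, hfin⟩)
  exact ⟨hle,
    fun _ hinj _ hs hsub ↦ finite_closure_of_subset_finiteProjectiveRank hinj hs (hsub.trans hle),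
    fun _ hm ↦ hρ.comp_subtype_of_lt hk hV (Subgroup.subset_normalClosure (Set.mem_singleton c))
      hnonscalar hfin hrank hm⟩

/-- If a linearly `k`-transitive subgroup `H ≤ GL(V)` (for `V` countably infinite
dimensional over a finite field, `k ≥ 3`) contains a non-scalar element `c` of projective
rank `0 < ‖c‖ < k/2`, then the normal closure of `c` in `H` consists of elements of finite
projective rank, is locally finite, and is linearly `(⌈k/2⌉ - 1)`-transitive. -/
theorem normal_closure_of_small_element {K V : Type*} [Field K] [Fintype K]
    [AddCommGroup V] [Module K V]
    (hdim : Module.rank K V = Cardinal.aleph0)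
    {k : ℕ} (hk : 3 ≤ k) (H : Subgroup (Module.End K V)ˣ)
    (htrans : ∀ u w : Fin k → V, LinearIndependent K u → LinearIndependent K w →
      ∃ h ∈ H, ∀ i, (h : Module.End K V) (u i) = w i)
    (c : (Module.End K V)ˣ) (hc : c ∈ H)
    -- `‖c‖ > 0`: `c` is not a scalar
    (hnonscalar : ∀ μ : Kˣ, (c : Module.End K V) ≠ (μ : K) • (1 : Module.End K V))
    -- `‖c‖ < k/2`
    (hsmall : ∃ μ : Kˣ,
      Module.Finite K
        ↥(LinearMap.range ((c : Module.End K V) - (μ : K) • (1 : Module.End K V))) ∧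
      2 * Module.finrank K
        ↥(LinearMap.range ((c : Module.End K V) - (μ : K) • (1 : Module.End K V))) < k) :
    (∀ x : ↥H, x ∈ Subgroup.normalClosure ({⟨c, hc⟩} : Set ↥H) → ∃ μ : Kˣ,
      Module.Finite K
        ↥(LinearMap.range (((x : (Module.End K V)ˣ) : Module.End K V) -
          (μ : K) • (1 : Module.End K V)))) ∧
    (∀ s : Finset ↥H, (↑s : Set ↥H) ⊆ Subgroup.normalClosure ({⟨c, hc⟩} : Set ↥H) →
      Finite (Subgroup.closure (↑s : Set ↥H))) ∧
    (∀ u w : Fin ((k + 1) / 2 - 1) → V,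
      LinearIndependent K u → LinearIndependent K w →
      ∃ x : ↥H, x ∈ Subgroup.normalClosure ({⟨c, hc⟩} : Set ↥H) ∧
        ∀ i, (((x : (Module.End K V)ˣ) : Module.End K V)) (u i) = w i) := by
  obtain ⟨hle, hfin, hlin⟩ := normal_closure_of_small_element_general (c := ⟨c, hc⟩)
    (ρ := (Units.coeHom (Module.End K V)).comp H.subtype) hk (hdim ▸ Cardinal.natCast_le_aleph0)
    (fun u w hu hw ↦ have ⟨h, hh, huw⟩ := htrans u w hu hw; ⟨⟨h, hh⟩, huw⟩) hnonscalar
    (hsmall.imp fun _ h ↦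
      ⟨Module.Finite.iff_fg.1 h.1, (Nat.le_mul_of_pos_left _ two_pos).trans_lt h.2⟩)
  exact ⟨fun x hx ↦ (hle hx).imp fun _ ↦ Module.Finite.iff_fg.2,
    fun s ↦ hfin inferInstance (Units.val_injective.comp H.subtype_injective) s s.finite_toSet,
    fun u w hu hw ↦ have ⟨x, h⟩ := hlin _ (by lia) u w hu hw; ⟨x, x.2, h⟩⟩
end

section
/- The group A(q)/Z, the metric completion of the inductive limit ⋃_n GL_{2ⁿ}(q) (under diagonal embeddings h ↦ diag(h,h)) with respect to the normalized projective rank metric, modulo its center Z ≅ F_qˣ, admits no mixed identity: for every non-trivial word with constants w ∈ (A(q)/Z) ∗ F_r, there exist group elements h₁,…,h_r with w(h₁,…,h_r) ≠ 1. -/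
/-!
Write `w` as a reduced word. Suppose first that its constants are linear automorphisms of `V` and
that each critical constant (one standing between a variable and its inverse) has projective rank
at least `k`. The variables are built greedily as partial automorphisms: starting from a vector
outside all domains and codomains used so far, follow its trajectory through `w`, choosing every
new image `q` so that the next constant `g` sends it to a fresh vector. The choice is obstructed
only at a critical constant, where `g q` has to avoid `S + K q` for the subspace `S` used so far; if
every `q` failed, `g` would be scalar modulo `S`, hence of projective rank at most `dim S`. A word
with `l` letters uses up at most `2 (l + 1)` dimensions per trajectory, and each trajectory raises
the projective rank of the value of `w` by one, so about `k / (2 (l + 1))` is reached.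

Being linear in `k`, this bound survives normalization: if the constants of `w` are approximated by
matrices of large size, the critical ones stay away from the scalars, so `w` takes a value on
matrices whose distance to `1` is bounded below independently of the approximation. By
bi-invariance the value of the original word at the same point is nearby, hence not `1`.
-/

namespace MixedIdentity

open Module

section Words

variable {ι H H' : Type*}

/-- A syllable `x_i^{±1}` of a word with constants in `H`, followed (to its left) by the constant
`const`; the exponent is `1` when `sgn` is `true` and `-1` when it is `false`. -/
structure Syllable (ι H : Type*) where
  idx : ι
  sgn : Bool
  const : H

/-- The syllable obtained by applying `f` to the constant. -/
@[simps]
def Syllable.map (f : H → H') (y : Syllable ι H) : Syllable ι H' := ⟨y.idx, y.sgn, f y.const⟩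

/-- A list of syllables is reduced relative to `P` if every critical constant, that is, every
constant standing between a variable and its inverse, satisfies `P`. For `P g := g ≠ 1` this is
the usual notion of a reduced word. -/
def IsReduced (P : H → Prop) (L : List (Syllable ι H)) : Prop :=
  L.IsChain fun y z => z.idx = y.idx → z.sgn = !y.sgn → P y.const

theorem IsReduced.map {P : H → Prop} {Q : H' → Prop} {f : H → H'} {L : List (Syllable ι H)}
    (hL : IsReduced P L) (hf : ∀ y ∈ L, P y.const → Q (f y.const)) :
    IsReduced Q (L.map (Syllable.map f)) :=
  (List.isChain_map _).2 <| hL.imp_of_mem_imp fun y _ hy _ h hidx hsgn => hf y hy (h hidx hsgn)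

variable [Group H] [Group H']

/-- The value `x_i^{±1}` of a letter under the substitution `x`. -/
def letter (x : ι → H) (i : ι) (e : Bool) : H := bif e then x i else (x i)⁻¹

theorem letter_not (x : ι → H) (i : ι) (e : Bool) : letter x i (!e) = (letter x i e)⁻¹ := by
  cases e <;> simp [letter]

theorem map_letter (f : H →* H') (x : ι → H) (i : ι) (e : Bool) :
    f (letter x i e) = letter (f ∘ x) i e := by
  cases e <;> simp [letter]

/-- The value under the substitution `x` of the word whose rightmost constant is `c` and whose
syllables, read from right to left, are the entries of the list: the head of the list is the
first one to act. -/
def eval (x : ι → H) : H → List (Syllable ι H) → H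
  | c, [] => c
  | c, y :: T => eval x y.const T * letter x y.idx y.sgn * c

@[simp]
theorem eval_nil (x : ι → H) (c : H) : eval x c [] = c := rfl

@[simp]
theorem eval_cons (x : ι → H) (c : H) (y : Syllable ι H) (T : List (Syllable ι H)) :
    eval x c (y :: T) = eval x y.const T * letter x y.idx y.sgn * c := rfl

theorem eval_mul_right (x : ι → H) (c g : H) (L : List (Syllable ι H)) :
    eval x (c * g) L = eval x c L * g := by
  cases L <;> simp [mul_assoc]

theorem map_eval (f : H →* H') (x : ι → H) (c : H) (L : List (Syllable ι H)) :
    f (eval x c L) = eval (f ∘ x) (f c) (L.map (Syllable.map f)) := by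
  induction L generalizing c with
  | nil => rfl
  | cons y T ih => simp [ih, map_letter]

end Words

section NormalForm

open Monoid (Coprod)

variable {ι G : Type*} [Group G]

/-- The element of `G ∗ F_ι` spelled by a list of syllables with constants in `G`. -/
def toCoprod (c : G) (L : List (Syllable ι G)) : Coprod G (FreeGroup ι) :=
  eval (Coprod.inr ∘ FreeGroup.of) (Coprod.inl c) (L.map (Syllable.map Coprod.inl))

theorem lift_toCoprod (h : ι → G) (c : G) (L : List (Syllable ι G)) :
    Coprod.lift (MonoidHom.id G) (FreeGroup.lift h) (toCoprod c L) = eval h c L := by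
  rw [toCoprod, map_eval]
  congr 1
  · ext; simp
  · simp [Syllable.map, Function.comp_def]

/-- An element of `G ∗ F_ι` has a reduced form if it is spelled by a reduced word. -/
def HasReducedForm (w : Coprod G (FreeGroup ι)) : Prop :=
  ∃ c L, IsReduced (· ≠ 1) L ∧ w = toCoprod c L

theorem HasReducedForm.one : HasReducedForm (1 : Coprod G (FreeGroup ι)) :=
  ⟨1, [], .nil, by simp [toCoprod]⟩

theorem HasReducedForm.mul_inl {w : Coprod G (FreeGroup ι)} (hw : HasReducedForm w) (g : G) :
    HasReducedForm (w * Coprod.inl g) := by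
  obtain ⟨c, L, hL, rfl⟩ := hw
  exact ⟨c * g, L, hL, by simp [toCoprod, eval_mul_right]⟩

theorem HasReducedForm.mul_letter {w : Coprod G (FreeGroup ι)} (hw : HasReducedForm w)
    (i : ι) (e : Bool) :
    HasReducedForm (w * letter (Coprod.inr ∘ FreeGroup.of) i e) := by
  obtain ⟨c, L, hL, rfl⟩ := hw
  by_cases hc : ∀ z ∈ L.head?, z.idx = i → z.sgn = !e → c ≠ 1
  · exact ⟨1, ⟨i, e, c⟩ :: L, List.isChain_cons.2 ⟨hc, hL⟩, by simp [toCoprod]⟩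
  · push Not at hc
    obtain ⟨y, hy, rfl, hsgn, rfl⟩ := hc
    obtain ⟨T, rfl⟩ := List.head?_eq_some_iff.1 hy
    refine ⟨y.const, T, List.IsChain.of_cons hL, ?_⟩
    simp [toCoprod, hsgn, letter_not]

theorem HasReducedForm.mul_inr {w : Coprod G (FreeGroup ι)} (hw : HasReducedForm w)
    (u : FreeGroup ι) : HasReducedForm (w * Coprod.inr u) := by
  induction u using FreeGroup.induction_on generalizing w with
  | C1 => simpa using hw
  | of i => exact hw.mul_letter i true
  | inv_of i _ => simpa [letter] using hw.mul_letter i false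
  | mul u v hu hv => simpa [mul_assoc] using hv (hu hw)

theorem HasReducedForm.mul {w : Coprod G (FreeGroup ι)} (hw : HasReducedForm w)
    (v : Coprod G (FreeGroup ι)) : HasReducedForm (w * v) := by
  induction v using Coprod.induction_on generalizing w with
  | inl g => exact hw.mul_inl g
  | inr u => exact hw.mul_inr u
  | mul u v hu hv => simpa [mul_assoc] using hv (hu hw)

theorem hasReducedForm (w : Coprod G (FreeGroup ι)) : HasReducedForm w := by
  simpa using HasReducedForm.one.mul w

end NormalForm

section ProjectiveRank

variable {K V : Type*} [Field K] [AddCommGroup V] [Module K V]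

theorem map_mem_of_forall_exists_sub_smul_mem {f : V →ₗ[K] V} {S : Submodule K V}
    (hS : 1 < finrank K (V ⧸ S)) (h : ∀ v ∉ S, ∃ a : K, f v - a • v ∈ S) {s : V} (hs : s ∈ S) :
    f s ∈ S := by
  -- Comparing `u` with `u + s` shows that `f s` would span the quotient.
  by_contra hfs
  refine hS.not_ge (finrank_le_one (S.mkQ (f s)) fun w => ?_)
  obtain ⟨u, rfl⟩ := S.mkQ_surjective w
  by_cases hu : u ∈ S
  · exact ⟨0, by simpa using ((Submodule.Quotient.mk_eq_zero S).2 hu).symm⟩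
  obtain ⟨a, ha⟩ := h u hu
  obtain ⟨b, hb⟩ := h (u + s) fun hus => hu ((S.add_mem_iff_left hs).1 hus)
  have hmem : f s - (b - a) • u ∈ S := by
    have := S.add_mem (S.sub_mem hb ha) (S.smul_mem b hs)
    convert this using 1
    rw [map_add]
    module
  have hba : b - a ≠ 0 := fun h0 => hfs (by simpa [h0] using hmem)
  refine ⟨(b - a)⁻¹, (Submodule.Quotient.eq S).2 ?_⟩
  simpa [smul_sub, smul_smul, hba] using S.smul_mem (b - a)⁻¹ hmem

theorem exists_forall_sub_smul_mem {f : V →ₗ[K] V} {S : Submodule K V}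
    (hS : 1 < finrank K (V ⧸ S)) (h : ∀ v ∉ S, ∃ a : K, f v - a • v ∈ S) :
    ∃ μ : K, ∀ v, f v - μ • v ∈ S := by
  have hinv : S ≤ S.comap f := fun s hs => map_mem_of_forall_exists_sub_smul_mem hS h hs
  obtain ⟨μ, hμ⟩ : ∃ μ : K, S.mapQ S f hinv = μ • 1 := by
    refine LinearMap.exists_eq_smul_id_of_forall_notLinearIndependent fun w hind => ?_
    obtain ⟨v, rfl⟩ := S.mkQ_surjective w
    have hv : v ∉ S := fun hv => hind.ne_zero 0 (by simpa using hv)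
    obtain ⟨a, ha⟩ := h v hv
    exact (LinearIndependent.pair_iff' (hind.ne_zero 0)).1 hind a
      ((Submodule.Quotient.eq S).2 ha).symm
  exact ⟨μ, fun v => (Submodule.Quotient.eq S).1 (LinearMap.congr_fun hμ (S.mkQ v))⟩

/-- The (unnormalized) projective rank of an endomorphism: its least rank distance to a scalar. -/
noncomputable def projRank (f : V →ₗ[K] V) : ℕ :=
  ⨅ μ : K, finrank K (LinearMap.range (f - μ • 1))

theorem projRank_le (f : V →ₗ[K] V) (μ : K) :
    projRank f ≤ finrank K (LinearMap.range (f - μ • 1)) :=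
  ciInf_le (OrderBot.bddBelow _) μ

theorem exists_finrank_range_eq_projRank (f : V →ₗ[K] V) :
    ∃ μ : K, finrank K (LinearMap.range (f - μ • 1)) = projRank f :=
  ciInf_mem fun μ : K => finrank K (LinearMap.range (f - μ • 1))

theorem le_projRank {f : V →ₗ[K] V} {m : ℕ}
    (h : ∀ μ : K, m ≤ finrank K (LinearMap.range (f - μ • 1))) : m ≤ projRank f :=
  le_ciInf h

theorem exists_notMem_and_map_notMem (g : V ≃ₗ[K] V) {S : Submodule K V} (hS : S ≠ ⊤) :
    ∃ q ∉ S, g q ∉ S := by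
  by_contra! h
  obtain ⟨u, hu⟩ := SetLike.exists_not_mem_of_ne_top S hS rfl
  obtain ⟨v, hv⟩ : ∃ v, g v ∉ S := ⟨g.symm u, by simpa using hu⟩
  have hvS : v ∈ S := by_contra fun hvS => hv (h v hvS)
  have huv : u + v ∉ S := fun huv => hu ((S.add_mem_iff_left hvS).1 huv)
  have := h _ huv
  rw [map_add] at this
  exact hv ((S.add_mem_iff_right (h u hu)).1 this)

variable [FiniteDimensional K V]

theorem exists_map_notMem_sup_span {g : V →ₗ[K] V} {S : Submodule K V}
    (hS : finrank K S + 2 ≤ finrank K V) (hg : finrank K S < projRank g) :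
    ∃ q ∉ S, g q ∉ S ⊔ K ∙ q := by
  by_contra! h
  have hquot : 1 < finrank K (V ⧸ S) := by
    have := S.finrank_quotient_add_finrank
    omega
  obtain ⟨μ, hμ⟩ := exists_forall_sub_smul_mem (f := g) hquot fun v hv => by
    obtain ⟨s, hs, t, ht, hst⟩ := Submodule.mem_sup.1 (h v hv)
    obtain ⟨a, rfl⟩ := Submodule.mem_span_singleton.1 ht
    exact ⟨a, by simpa [← hst] using hs⟩
  refine hg.not_ge ((projRank_le g μ).trans (Submodule.finrank_mono ?_))
  rintro _ ⟨v, rfl⟩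
  simpa using hμ v

theorem exists_notMem_and_map_notMem_sup_span (g : V ≃ₗ[K] V) {S : Submodule K V}
    (hS : finrank K S + 2 ≤ finrank K V) :
    ∃ q ∉ S, g q ∉ S ∧ (finrank K S < projRank g.toLinearMap → g q ∉ S ⊔ K ∙ q) := by
  by_cases hg : finrank K S < projRank g.toLinearMap
  · obtain ⟨q, hqS, hgq⟩ := exists_map_notMem_sup_span hS hg
    exact ⟨q, hqS, fun h => hgq (Submodule.mem_sup_left h), fun _ => hgq⟩
  · have hS' : S ≠ ⊤ := by
      rintro rfl
      simp at hS
    obtain ⟨q, hqS, hgq⟩ := exists_notMem_and_map_notMem g hS'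
    exact ⟨q, hqS, hgq, fun h => absurd h hg⟩

theorem finrank_sup_span_pair_le (S : Submodule K V) (a b : V) :
    finrank K ↥(S ⊔ Submodule.span K {a, b}) ≤ finrank K S + 2 := by
  classical
  have hab : finrank K (Submodule.span K {a, b}) ≤ 2 := by
    have := finrank_span_finset_le_card (R := K) ({a, b} : Finset V)
    rw [Finset.coe_pair] at this
    exact this.trans Finset.card_le_two
  exact (Submodule.finrank_add_le_finrank_add_finrank _ _).trans (by gcongr)

end ProjectiveRank

section PartialAction

variable {K ι V : Type*} [Field K] [AddCommGroup V] [Module K V]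

theorem disjoint_sup_span_singleton_ker {W : Type*} [AddCommGroup W] [Module K W]
    {f : V →ₗ[K] W} {R : Submodule K V} {x : V} (hR : Disjoint R (LinearMap.ker f))
    (hx : f x ∉ R.map f) : Disjoint (R ⊔ K ∙ x) (LinearMap.ker f) := by
  refine Submodule.disjoint_def.2 fun y hy hfy => ?_
  obtain ⟨r, hr, t, ht, rfl⟩ := Submodule.mem_sup.1 hy
  obtain ⟨a, rfl⟩ := Submodule.mem_span_singleton.1 ht
  have hfr : f r + a • f x = 0 := by simpa using hfy
  obtain rfl : a = 0 := by
    by_contra ha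
    refine hx ⟨-(a⁻¹ • r), R.neg_mem (R.smul_mem _ hr), ?_⟩
    simp [eq_neg_of_add_eq_zero_left hfr, ha]
  simpa using Submodule.disjoint_def.1 hR r hr (by simpa using hfr)

theorem exists_le_graph [FiniteDimensional K V] {R : Submodule K (V × V)}
    (hfst : Disjoint R (LinearMap.ker (LinearMap.fst K V V)))
    (hsnd : Disjoint R (LinearMap.ker (LinearMap.snd K V V))) :
    ∃ h : V ≃ₗ[K] V, R ≤ (h : V →ₗ[K] V).graph := by
  let dom := LinearEquiv.ofInjective _ (LinearMap.injective_domRestrict_iff.2 hfst)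
  let cod := LinearEquiv.ofInjective _ (LinearMap.injective_domRestrict_iff.2 hsnd)
  obtain ⟨h, hh⟩ := Submodule.exists_linearEquiv_restrict_eq (dom.symm.trans cod)
  refine ⟨h, fun x hx => (LinearMap.mem_graph_iff _ _).2 ?_⟩
  simpa [dom, cod] using hh (dom ⟨x, hx⟩)

variable (K) in
/-- The coordinate of a pair `(v, h v)` to which the letter `h^{±1}` of exponent `e` applies; the
other coordinate `source K (!e)` is then the value of the letter. -/
def source (e : Bool) : V × V →ₗ[K] V := bif e then LinearMap.fst K V V else LinearMap.snd K V V

theorem exists_source_eq (e : Bool) (p q : V) :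
    ∃ x : V × V, source K e x = p ∧ source K (!e) x = q := by
  cases e
  · exact ⟨(q, p), rfl, rfl⟩
  · exact ⟨(p, q), rfl, rfl⟩

theorem letter_source {h : ι → V ≃ₗ[K] V} {i : ι} {x : V × V}
    (hx : x ∈ (h i : V →ₗ[K] V).graph) (e : Bool) :
    letter h i e (source K e x) = source K (!e) x := by
  replace hx : x.2 = h i x.1 := hx
  cases e
  · simpa [letter, source] using (LinearEquiv.symm_apply_eq _).2 hx
  · exact hx.symm

variable (K ι V) in
/-- A family of partial linear automorphisms of `V`, given by their graphs `rel i`, together with a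
subspace `support` containing all their domains and codomains. -/
structure PartialAction where
  rel : ι → Submodule K (V × V)
  support : Submodule K V
  disjoint_ker : ∀ i e, Disjoint (rel i) (LinearMap.ker (source K e))
  map_le_support : ∀ i e, (rel i).map (source K e) ≤ support

namespace PartialAction

instance : Preorder (PartialAction K ι V) := Preorder.lift fun A => (A.rel, A.support)

instance : Bot (PartialAction K ι V) where
  bot := ⟨⊥, ⊥, fun _ _ => disjoint_bot_left, fun _ _ => (Submodule.map_bot _).le⟩

@[simp]
theorem bot_support : (⊥ : PartialAction K ι V).support = ⊥ := rfl

/-- The subspace on which the letter `x_i^{±1}` of exponent `e` is already determined. -/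
def dom (A : PartialAction K ι V) (i : ι) (e : Bool) : Submodule K V :=
  (A.rel i).map (source K e)

/-- The automorphisms `h` extend the partial automorphisms of `A`. -/
def Realizes (A : PartialAction K ι V) (h : ι → V ≃ₗ[K] V) : Prop :=
  ∀ i, A.rel i ≤ (h i : V →ₗ[K] V).graph

theorem Realizes.anti {A B : PartialAction K ι V} {h : ι → V ≃ₗ[K] V} (hB : B.Realizes h)
    (hAB : A ≤ B) : A.Realizes h :=
  fun i => (hAB.1 i).trans (hB i)

theorem exists_realizes [FiniteDimensional K V] (A : PartialAction K ι V) :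
    ∃ h, A.Realizes h :=
  Classical.skolem.1 fun i => exists_le_graph (A.disjoint_ker i true) (A.disjoint_ker i false)

/-- Enlarging the support. -/
@[simps]
def enlarge (A : PartialAction K ι V) (S : Submodule K V) (hS : A.support ≤ S) :
    PartialAction K ι V where
  rel := A.rel
  support := S
  disjoint_ker := A.disjoint_ker
  map_le_support i e := (A.map_le_support i e).trans hS

theorem le_enlarge (A : PartialAction K ι V) {S : Submodule K V} (hS : A.support ≤ S) :
    A ≤ A.enlarge S hS :=
  ⟨le_rfl, hS⟩

@[simp]
theorem enlarge_dom (A : PartialAction K ι V) {S : Submodule K V} (hS : A.support ≤ S) (i : ι)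
    (e : Bool) : (A.enlarge S hS).dom i e = A.dom i e := rfl

open Classical in
/-- Extending the `i`-th partial automorphism by the pair `x`. -/
@[simps]
noncomputable def adjoin (A : PartialAction K ι V) (i : ι) (x : V × V)
    (hxS : ∀ e, source K e x ∈ A.support) (hx : ∀ e, source K e x ∉ A.dom i e) :
    PartialAction K ι V where
  rel := Function.update A.rel i (A.rel i ⊔ K ∙ x)
  support := A.support
  disjoint_ker := (Function.forall_update_iff A.rel
      fun _ R => ∀ e, Disjoint R (LinearMap.ker (source K e))).2
    ⟨fun e => disjoint_sup_span_singleton_ker (A.disjoint_ker i e) (hx e),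
      fun j _ => A.disjoint_ker j⟩
  map_le_support := (Function.forall_update_iff A.rel
      fun _ R => ∀ e, R.map (source K e) ≤ A.support).2
    ⟨fun e => by simpa [Submodule.map_sup, Submodule.map_span, A.map_le_support] using hxS e,
      fun j _ => A.map_le_support j⟩

section Adjoin

variable {A : PartialAction K ι V} {i : ι} {x : V × V}
  {hxS : ∀ e, source K e x ∈ A.support} {hx : ∀ e, source K e x ∉ A.dom i e}

theorem le_adjoin : A ≤ A.adjoin i x hxS hx := by
  classical
  refine ⟨fun j => ?_, le_rfl⟩
  obtain rfl | hji := eq_or_ne j i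
  · simp
  · simp [hji]

theorem mem_adjoin_rel : x ∈ (A.adjoin i x hxS hx).rel i := by
  simpa using Submodule.mem_sup_right (Submodule.mem_span_singleton_self x)

theorem adjoin_dom_self (e : Bool) :
    (A.adjoin i x hxS hx).dom i e = A.dom i e ⊔ K ∙ source K e x := by
  simp [dom, Submodule.map_sup, Submodule.map_span]

theorem adjoin_dom_of_ne {j : ι} (hj : j ≠ i) (e : Bool) :
    (A.adjoin i x hxS hx).dom j e = A.dom j e := by
  simp [dom, hj]

end Adjoin

variable [FiniteDimensional K V]

theorem exists_step {k : ℕ} (hk : k ≤ finrank K V) (A : PartialAction K ι V)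
    (hA : finrank K A.support + 2 ≤ k) (g : V ≃ₗ[K] V) {i : ι} {e : Bool} {p : V}
    (hp : p ∈ A.support) (hpi : p ∉ A.dom i e) :
    ∃ B ≥ A, ∃ q, finrank K B.support ≤ finrank K A.support + 2 ∧ g q ∈ B.support ∧
      g q ∉ A.support ∧ (∀ h, B.Realizes h → letter h i e p = q) ∧
      ∀ j e', (j = i → e' = !e → k ≤ projRank g.toLinearMap) → g q ∉ B.dom j e' := by
  obtain ⟨q, hq, hgq, hgq'⟩ := exists_notMem_and_map_notMem_sup_span g (hA.trans hk)
  obtain ⟨x, hxp, hxq⟩ := exists_source_eq (K := K) e p q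
  set S := A.support ⊔ Submodule.span K {q, g q}
  have hAS : A.support ≤ S := le_sup_left
  have hspan : ∀ v ∈ ({q, g q} : Set V), v ∈ S := fun v hv =>
    Submodule.mem_sup_right (Submodule.subset_span hv)
  have hxS : ∀ e', source K e' x ∈ (A.enlarge S hAS).support := fun e' => by
    obtain rfl | rfl := e'.eq_or_eq_not e
    · exact hxp ▸ hAS hp
    · exact hxq ▸ hspan q (by simp)
  have hx : ∀ e', source K e' x ∉ (A.enlarge S hAS).dom i e' := fun e' => by
    obtain rfl | rfl := e'.eq_or_eq_not e
    · exact hxp ▸ hpi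
    · exact fun h => hq (A.map_le_support i _ (hxq ▸ h))
  refine ⟨(A.enlarge S hAS).adjoin i x hxS hx, (A.le_enlarge hAS).trans le_adjoin, q,
    finrank_sup_span_pair_le _ _ _, hspan _ (by simp), hgq, fun h hh => ?_, fun j e' hcrit => ?_⟩
  · rw [← hxp, letter_source (hh i mem_adjoin_rel), hxq]
  obtain rfl | hji := eq_or_ne j i
  · rw [adjoin_dom_self, enlarge_dom]
    obtain rfl | rfl := e'.eq_or_eq_not e
    · rw [hxp]
      refine fun h => hgq (sup_le (A.map_le_support j _) ?_ h)
      exact (Submodule.span_singleton_le_iff_mem _ _).2 hp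
    · rw [hxq]
      have hrank : finrank K A.support < projRank g.toLinearMap := by
        have := hcrit rfl rfl
        omega
      exact fun h => hgq' hrank (sup_le_sup_right (A.map_le_support j _) _ h)
  · rw [adjoin_dom_of_ne hji, enlarge_dom]
    exact fun h => hgq (A.map_le_support j _ h)

theorem exists_trajectory {k : ℕ} (hk : k ≤ finrank K V) (A : PartialAction K ι V)
    (c : V ≃ₗ[K] V) (y : Syllable ι (V ≃ₗ[K] V)) (T : List (Syllable ι (V ≃ₗ[K] V)))
    (hred : IsReduced (fun g : V ≃ₗ[K] V => k ≤ projRank g.toLinearMap) (y :: T))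
    (hlen : finrank K A.support + 2 * (T.length + 1) ≤ k) {v : V}
    (hcv : c v ∈ A.support) (hcv' : c v ∉ A.dom y.idx y.sgn) :
    ∃ B ≥ A, ∃ z ∈ B.support, z ∉ A.support ∧
      finrank K B.support ≤ finrank K A.support + 2 * (T.length + 1) ∧
      ∀ h, B.Realizes h → eval h c (y :: T) v = z := by
  induction T generalizing A c y v with
  | nil =>
    obtain ⟨B, hAB, q, hB, hmem, hnotMem, hq, -⟩ := exists_step hk A hlen y.const hcv hcv'
    exact ⟨B, hAB, y.const q, hmem, hnotMem, hB, fun h hh => by simp [hq h hh]⟩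
  | cons z T ih =>
    rw [List.length_cons] at hlen ⊢
    obtain ⟨B, hAB, q, hB, hmem, -, hq, hfresh⟩ := exists_step hk A (by omega) y.const hcv hcv'
    obtain ⟨hcrit, hred⟩ := List.isChain_cons_cons.1 hred
    obtain ⟨C, hBC, u, hu, huB, hC, heval⟩ :=
      ih B y.const z hred (by omega) hmem (hfresh _ _ hcrit)
    refine ⟨C, hAB.trans hBC, u, hu, fun h => huB (hAB.2 h), by omega, fun h hh => ?_⟩
    rw [← heval h hh, ← hq h (hh.anti hBC)]
    simp

theorem exists_fresh_value {k : ℕ} (hk : k ≤ finrank K V) (A : PartialAction K ι V)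
    (c : V ≃ₗ[K] V) {L : List (Syllable ι (V ≃ₗ[K] V))} (hL : L ≠ [])
    (hred : IsReduced (fun g : V ≃ₗ[K] V => k ≤ projRank g.toLinearMap) L)
    (hlen : finrank K A.support + 2 * (L.length + 1) ≤ k) :
    ∃ B ≥ A, ∃ v ∈ B.support, ∃ z ∈ B.support, (∀ μ : K, z - μ • v ∉ A.support) ∧
      finrank K B.support ≤ finrank K A.support + 2 * (L.length + 1) ∧
      ∀ h, B.Realizes h → eval h c L v = z := by
  obtain ⟨y, T, rfl⟩ := List.exists_cons_of_ne_nil hL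
  rw [List.length_cons] at hlen ⊢
  have hne : A.support ≠ ⊤ := fun htop => by
    rw [htop, finrank_top] at hlen
    omega
  obtain ⟨v, -, hcv⟩ := exists_notMem_and_map_notMem c hne
  have hAS : A.support ≤ A.support ⊔ Submodule.span K {v, c v} := le_sup_left
  set A' := A.enlarge _ hAS
  have hA' : finrank K A'.support ≤ finrank K A.support + 2 := finrank_sup_span_pair_le _ _ _
  have hspan : ∀ u ∈ ({v, c v} : Set V), u ∈ A'.support :=
    fun u hu => Submodule.mem_sup_right (Submodule.subset_span hu)
  have hv : v ∈ A'.support := hspan v (by simp)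
  obtain ⟨B, hB, z, hzB, hz, hBrank, heval⟩ := exists_trajectory hk A' c y T hred (by omega)
    (hspan _ (by simp)) fun h => hcv (A.map_le_support _ _ h)
  refine ⟨B, (A.le_enlarge hAS).trans hB, v, hB.2 hv, z, hzB, fun μ h => hz ?_, by omega, heval⟩
  exact (Submodule.sub_mem_iff_left _ (A'.support.smul_mem μ hv)).1 (hAS h)

/- `E` collects the pairs (starting vector, final vector) of `m` trajectories: freshness makes the
differences `z - μ • v` independent for every `μ` at once. -/
theorem exists_le_graph_eval {k : ℕ} (hk : k ≤ finrank K V) (c : V ≃ₗ[K] V)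
    {L : List (Syllable ι (V ≃ₗ[K] V))} (hL : L ≠ [])
    (hred : IsReduced (fun g : V ≃ₗ[K] V => k ≤ projRank g.toLinearMap) L) (m : ℕ)
    (hm : m * (2 * (L.length + 1)) ≤ k) :
    ∃ (A : PartialAction K ι V) (E : Submodule K (V × V)), E ≤ A.support.prod A.support ∧
      finrank K A.support ≤ m * (2 * (L.length + 1)) ∧
      (∀ h, A.Realizes h → E ≤ (eval h c L).toLinearMap.graph) ∧
      ∀ μ : K, m ≤ finrank K (E.map (LinearMap.snd K V V - μ • LinearMap.fst K V V)) := by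
  induction m with
  | zero => exact ⟨⊥, ⊥, bot_le, by simp, fun _ _ => bot_le, fun _ => Nat.zero_le _⟩
  | succ m ih =>
    rw [add_one_mul] at hm ⊢
    obtain ⟨A, E, hES, hA, hE, hrank⟩ := ih (by omega)
    obtain ⟨B, hAB, v, hv, z, hz, hfresh, hB, heval⟩ :=
      exists_fresh_value hk A c hL hred (by omega)
    refine ⟨B, E ⊔ K ∙ (v, z), sup_le ?_ ?_, by omega, fun h hh => sup_le ?_ ?_, fun μ => ?_⟩
    · exact hES.trans (Submodule.prod_mono hAB.2 hAB.2)
    · exact (Submodule.span_singleton_le_iff_mem _ _).2 ⟨hv, hz⟩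
    · exact hE h (hh.anti hAB)
    · exact (Submodule.span_singleton_le_iff_mem _ _).2 (heval h hh).symm
    · have hnotMem : z - μ • v ∉ E.map (LinearMap.snd K V V - μ • LinearMap.fst K V V) := by
        rintro ⟨x, hx, hxz⟩
        exact hfresh μ (hxz ▸ sub_mem (hES hx).2 (A.support.smul_mem μ (hES hx).1))
      rw [Submodule.map_sup, Submodule.map_span, Set.image_singleton]
      change m + 1 ≤ finrank K ↥(_ ⊔ K ∙ (z - μ • v))
      rw [Submodule.finrank_sup_span_singleton hnotMem]
      exact Nat.succ_le_succ (hrank μ)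

end PartialAction

theorem exists_le_projRank_eval [FiniteDimensional K V] {m k : ℕ} (hk : k ≤ finrank K V)
    (c : V ≃ₗ[K] V) {L : List (Syllable ι (V ≃ₗ[K] V))} (hL : L ≠ [])
    (hred : IsReduced (fun g : V ≃ₗ[K] V => k ≤ projRank g.toLinearMap) L)
    (hm : m * (2 * (L.length + 1)) ≤ k) :
    ∃ h : ι → V ≃ₗ[K] V, m ≤ projRank (eval h c L).toLinearMap := by
  obtain ⟨A, E, -, -, hE, hrank⟩ := PartialAction.exists_le_graph_eval hk c hL hred m hm
  obtain ⟨h, hh⟩ := A.exists_realizes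
  refine ⟨h, le_projRank fun μ => (hrank μ).trans (Submodule.finrank_mono ?_)⟩
  rintro _ ⟨x, hx, rfl⟩
  have hx' : x.2 = eval h c L x.1 := hE h hh hx
  exact ⟨x.1, by simp [hx']⟩

end PartialAction

section Matrix

variable {K ι n : Type*} [Field K] [Fintype n] [DecidableEq n]

/-- Invertible matrices as linear automorphisms of the space of column vectors. -/
def toAut : (Matrix n n K)ˣ ≃* ((n → K) ≃ₗ[K] (n → K)) :=
  Matrix.GeneralLinearGroup.toLin.trans
    (LinearMap.GeneralLinearGroup.generalLinearEquiv K (n → K))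

theorem toLinearMap_toAut (a : (Matrix n n K)ˣ) :
    (toAut a).toLinearMap = a.val.mulVecLin := rfl

theorem exists_le_projRank_mulVecLin_eval {m k : ℕ} (hk : k ≤ Fintype.card n)
    (c : (Matrix n n K)ˣ) {L : List (Syllable ι (Matrix n n K)ˣ)} (hL : L ≠ [])
    (hred : IsReduced (fun g : (Matrix n n K)ˣ => k ≤ projRank g.val.mulVecLin) L)
    (hm : m * (2 * (L.length + 1)) ≤ k) :
    ∃ x : ι → (Matrix n n K)ˣ, m ≤ projRank (eval x c L).val.mulVecLin := by
  obtain ⟨h, hh⟩ := exists_le_projRank_eval (K := K) (V := n → K) (by simpa using hk) (toAut c)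
    (L := L.map (Syllable.map toAut)) (by simpa using hL) (hred.map fun _ _ h => h)
    (by simpa using hm)
  refine ⟨toAut.symm ∘ h, hh.trans_eq ?_⟩
  rw [← toLinearMap_toAut, ← MulEquiv.coe_toMonoidHom toAut, map_eval]
  simp [← Function.comp_assoc]

theorem exists_mul_card_le_projRank_mulVecLin_eval {δ : ℝ} (hδ₀ : 0 ≤ δ) (hδ₁ : δ ≤ 1)
    (c : (Matrix n n K)ˣ) {L : List (Syllable ι (Matrix n n K)ˣ)} (hL : L ≠ [])
    (hred : IsReduced
      (fun g : (Matrix n n K)ˣ => δ * Fintype.card n ≤ projRank g.val.mulVecLin) L)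
    (hcard : 4 * (L.length + 1) ≤ δ * Fintype.card n) :
    ∃ x : ι → (Matrix n n K)ˣ, δ / (4 * (L.length + 1)) * Fintype.card n ≤
      projRank (eval x c L).val.mulVecLin := by
  set C : ℝ := 2 * (L.length + 1) with hC
  set t : ℝ := δ * Fintype.card n
  have hC₀ : 0 < C := by positivity
  have ht : 2 * C ≤ t := by linarith
  set m := ⌊t / C⌋₊
  have hmt : ((m * (2 * (L.length + 1)) : ℕ) : ℝ) ≤ t := by
    push_cast
    exact (le_div_iff₀ hC₀).1 (Nat.floor_le (by positivity))
  have htcard : t ≤ Fintype.card n := mul_le_of_le_one_left (Nat.cast_nonneg _) hδ₁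
  obtain ⟨x, hx⟩ := exists_le_projRank_mulVecLin_eval (Nat.cast_le.1 (hmt.trans htcard)) c hL
    (hred.imp fun _ _ h hidx hsgn => Nat.cast_le.1 (hmt.trans (h hidx hsgn))) le_rfl
  refine ⟨x, le_trans ?_ (Nat.cast_le.2 hx)⟩
  have hm : t / C < m + 1 := Nat.lt_floor_add_one _
  have ht2 : 2 ≤ t / C := (le_div_iff₀ hC₀).2 ht
  calc δ / (4 * (L.length + 1)) * Fintype.card n = t / C / 2 := by
        simp only [t, hC]
        field_simp
        ring
    _ ≤ m := by linarith

theorem rank_sub_smul_one (a : Matrix n n K) (μ : K) :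
    (a - μ • 1).rank = finrank K (LinearMap.range (a.mulVecLin - μ • 1)) := by
  have hsub : (a - μ • 1).mulVecLin = a.mulVecLin - μ • 1 :=
    LinearMap.ext fun v => by simp
  rw [Matrix.rank, hsub]

theorem sInf_rank_sub_smul_one (a : (Matrix n n K)ˣ) :
    sInf {m | ∃ μ : Kˣ, (a.val - (μ : K) • 1).rank = m} = projRank a.val.mulVecLin := by
  apply le_antisymm
  · obtain ⟨μ, hμ⟩ := exists_finrank_range_eq_projRank a.val.mulVecLin
    rw [← hμ, ← rank_sub_smul_one]
    obtain rfl | hμ0 := eq_or_ne μ 0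
    · calc sInf {m | ∃ μ : Kˣ, (a.val - (μ : K) • 1).rank = m}
          ≤ (a.val - ((1 : Kˣ) : K) • 1).rank := Nat.sInf_le ⟨1, rfl⟩
        _ ≤ Fintype.card n := Matrix.rank_le_card_width _
        _ = (a.val - (0 : K) • 1).rank := by simp [Matrix.rank_of_isUnit]
    · exact Nat.sInf_le ⟨Units.mk0 μ hμ0, rfl⟩
  · refine le_csInf ⟨_, 1, rfl⟩ ?_
    rintro _ ⟨μ, rfl⟩
    exact (projRank_le _ _).trans_eq (rank_sub_smul_one _ _).symm

theorem exists_units_coe_eq_reindex_blockDiagonal {o p : Type*} [Finite o] [DecidableEq o]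
    [Fintype p] [DecidableEq p] (e : n × o ≃ p) (a : (Matrix n n K)ˣ) :
    ∃ b : (Matrix p p K)ˣ,
      b.val = Matrix.reindex e e (Matrix.blockDiagonal fun _ : o => a.val) := by
  have := Fintype.ofFinite o
  let diag : Matrix n n K →+* Matrix p p K :=
    ((Matrix.reindexAlgEquiv K K e).toRingEquiv.toRingHom.comp
      (Matrix.blockDiagonalRingHom n o K)).comp (RingHom.pi fun _ => .id _)
  exact ⟨Units.map diag.toMonoidHom a, rfl⟩

end Matrix

section Metric

open Filter Topology

variable {ι G : Type*} [Group G]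

section Pseudo

variable [PseudoMetricSpace G] [IsIsometricSMul G G] [IsIsometricSMul Gᵐᵒᵖ G]

theorem dist_mul_mul_le_add (a b a' b' : G) :
    dist (a * b) (a' * b') ≤ dist a a' + dist b b' :=
  calc dist (a * b) (a' * b') ≤ dist (a * b) (a' * b) + dist (a' * b) (a' * b') :=
        dist_triangle _ _ _
    _ = dist a a' + dist b b' := by rw [dist_mul_right, dist_mul_left]

theorem dist_eval_map_le (x : ι → G) {f : G → G} {η : ℝ} {c : G} {L : List (Syllable ι G)}
    (hc : dist (f c) c ≤ η) (hL : ∀ y ∈ L, dist (f y.const) y.const ≤ η) :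
    dist (eval x (f c) (L.map (Syllable.map f))) (eval x c L) ≤ (L.length + 1) * η := by
  induction L generalizing c with
  | nil => simpa using hc
  | cons y T ih =>
    obtain ⟨hy, hT⟩ := List.forall_mem_cons.1 hL
    have := ih hy hT
    calc dist (eval x (f c) ((y :: T).map (Syllable.map f))) (eval x c (y :: T))
        ≤ dist (eval x (f y.const) (T.map (Syllable.map f)) * letter x y.idx y.sgn)
            (eval x y.const T * letter x y.idx y.sgn) + dist (f c) c := dist_mul_mul_le_add _ _ _ _
      _ ≤ (T.length + 1) * η + η := by
        rw [dist_mul_right]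
        gcongr
      _ = ((y :: T).length + 1) * η := by
        push_cast [List.length_cons]
        ring

end Pseudo

variable {H : ℕ → Type*} [∀ n, Group (H n)] {φ : ∀ n, H n →* G}

theorem eventually_forall_exists_dist_lt [PseudoMetricSpace G]
    (hmono : Monotone fun n => (φ n).range) (hdense : Dense (⋃ n, Set.range (φ n)))
    {s : Set G} (hs : s.Finite) {η : ℝ} (hη : 0 < η) :
    ∀ᶠ n in atTop, ∀ g ∈ s, ∃ a, dist (φ n a) g < η := by
  refine (eventually_all_finite hs).2 fun g _ => ?_
  obtain ⟨b, hb, hbg⟩ := hdense.exists_dist_lt g hη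
  obtain ⟨N, a, rfl⟩ := Set.mem_iUnion.1 hb
  filter_upwards [eventually_ge_atTop N] with n hn
  obtain ⟨a', ha'⟩ := hmono hn ⟨a, rfl⟩
  exact ⟨a', by rwa [ha', dist_comm]⟩

theorem exists_pos_forall_le_dist {X : Type*} [MetricSpace X] {s : Set X} (hs : s.Finite) (x : X) :
    ∃ δ > 0, ∀ y ∈ s, y ≠ x → δ ≤ dist y x := by
  have : ∀ᶠ δ : ℝ in 𝓝[>] 0, ∀ y ∈ s, y ≠ x → δ ≤ dist y x := by
    refine (eventually_all_finite hs).2 fun y _ => eventually_imp_distrib_left.2 fun hy => ?_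
    filter_upwards [Ioc_mem_nhdsGT (dist_pos.2 hy)] with δ hδ using hδ.2
  obtain ⟨δ, hδ, hδ₀⟩ := (this.and self_mem_nhdsWithin).exists
  exact ⟨δ, hδ₀, hδ⟩

variable [MetricSpace G] [IsIsometricSMul G G] [IsIsometricSMul Gᵐᵒᵖ G]

theorem exists_eval_ne_one (hmono : Monotone fun n => (φ n).range)
    (hdense : Dense (⋃ n, Set.range (φ n))) (c : G) {L : List (Syllable ι G)}
    (hL : IsReduced (· ≠ 1) L)
    (heval : ∀ δ > 0, ∃ ε > 0, ∀ᶠ n in atTop, ∀ (a : H n) (M : List (Syllable ι (H n))),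
      M.length = L.length → IsReduced (fun g => δ ≤ dist (φ n g) 1) M →
      ∃ x, ε ≤ dist (φ n (eval x a M)) 1) :
    ∃ x : ι → G, eval x c L ≠ 1 := by
  let s : Set G := {g | g ∈ c :: L.map Syllable.const}
  have hs : s.Finite := List.finite_toSet _
  have hLs : ∀ y ∈ L, y.const ∈ s := fun y hy => by simpa [s] using .inr ⟨y, hy, rfl⟩
  obtain ⟨δ, hδ₀, hδ⟩ := exists_pos_forall_le_dist hs 1
  obtain ⟨ε, hε₀, hε⟩ := heval (δ / 2) (by positivity)
  have hη : 0 < min (δ / 2) (ε / (2 * (L.length + 1))) := by positivity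
  obtain ⟨n, hn, happrox⟩ :=
    (hε.and (eventually_forall_exists_dist_lt hmono hdense hs hη)).exists
  choose! α hα using happrox
  have hred : IsReduced (fun g => δ / 2 ≤ dist (φ n g) 1) (L.map (Syllable.map α)) :=
    hL.map fun y hy hy1 => by
      have hfar : δ ≤ dist y.const 1 := hδ _ (hLs y hy) hy1
      have hnear : dist (φ n (α y.const)) y.const < δ / 2 :=
        (hα _ (hLs y hy)).trans_le (min_le_left _ _)
      linarith [dist_triangle_left y.const 1 (φ n (α y.const))]
  obtain ⟨x, hx⟩ := hn (α c) _ (by simp) hred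
  refine ⟨φ n ∘ x, fun hone => ?_⟩
  have hclose := dist_eval_map_le (φ n ∘ x) (f := φ n ∘ α) (c := c) (L := L)
    (hα c (by simp [s])).le fun y hy => (hα _ (hLs y hy)).le
  rw [map_eval, List.map_map] at hx
  have : ε ≤ ε / 2 :=
    calc ε ≤ (L.length + 1) * min (δ / 2) (ε / (2 * (L.length + 1))) := by
          rw [hone] at hclose
          exact hx.trans hclose
      _ ≤ (L.length + 1) * (ε / (2 * (L.length + 1))) := by gcongr; exact min_le_right _ _
      _ = ε / 2 := by field_simp
  linarith

end Metric

section GeneralLinear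

open Filter

variable {K ι G : Type*} [Field K] [Group G]

theorem exists_pos_eventually_le_dist_eval [PseudoMetricSpace G] {N : ℕ → Type*}
    [∀ n, Fintype (N n)] [∀ n, DecidableEq (N n)]
    (hN : Tendsto (fun n => (Fintype.card (N n) : ℝ)) atTop atTop)
    {φ : ∀ n, (Matrix (N n) (N n) K)ˣ →* G}
    (hφ : ∀ n a, dist (φ n a) 1 = projRank a.val.mulVecLin / Fintype.card (N n))
    {l : ℕ} (hl : l ≠ 0) {δ : ℝ} (hδ : 0 < δ) :
    ∃ ε > 0, ∀ᶠ n in atTop, ∀ (c : (Matrix (N n) (N n) K)ˣ) (M : List (Syllable ι _)),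
      M.length = l → IsReduced (fun g => δ ≤ dist (φ n g) 1) M →
      ∃ x, ε ≤ dist (φ n (eval x c M)) 1 := by
  have hδ' : 0 < min δ 1 := by positivity
  refine ⟨min δ 1 / (4 * (l + 1)), by positivity, ?_⟩
  filter_upwards [hN.eventually_ge_atTop (4 * (l + 1) / min δ 1), hN.eventually_gt_atTop 0]
    with n hn hn₀ c M hM hred
  subst hM
  simp only [hφ, le_div_iff₀ hn₀] at hred ⊢
  refine exists_mul_card_le_projRank_mulVecLin_eval hδ'.le (min_le_right _ _) c
    (List.ne_nil_of_length_pos (Nat.pos_of_ne_zero hl))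
    (hred.imp fun _ _ h hidx hsgn => le_trans ?_ (h hidx hsgn)) ((div_le_iff₀' hδ').1 hn)
  gcongr
  exact min_le_left _ _

theorem monotone_range_of_blockDiagonal
    {φ : ∀ n : ℕ, (Matrix (Fin (2 ^ n)) (Fin (2 ^ n)) K)ˣ →* G}
    (e : ∀ n : ℕ, Fin (2 ^ n) × Fin 2 ≃ Fin (2 ^ (n + 1)))
    (hφ : ∀ n a b, b.val = Matrix.reindex (e n) (e n) (Matrix.blockDiagonal fun _ => a.val) →
      φ (n + 1) b = φ n a) :
    Monotone fun n => (φ n).range := by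
  refine monotone_nat_of_le_succ fun n => ?_
  rintro _ ⟨a, rfl⟩
  obtain ⟨b, hb⟩ := exists_units_coe_eq_reindex_blockDiagonal (e n) a
  exact ⟨b, hφ n a b hb⟩

end GeneralLinear

end MixedIdentity

open MixedIdentity in
theorem Aq_mod_center_mixed_identity_free_general
    {K : Type*} [Field K] (G : Type*) [Group G] [MetricSpace G]
    (hbiinv : ∀ f a b : G, dist (f * a) (f * b) = dist a b ∧ dist (a * f) (b * f) = dist a b)
    (φ : ∀ n : ℕ, (Matrix (Fin (2 ^ n)) (Fin (2 ^ n)) K)ˣ →* G)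
    (hcompat : ∀ n : ℕ, ∀ a : (Matrix (Fin (2 ^ n)) (Fin (2 ^ n)) K)ˣ,
      ∀ b : (Matrix (Fin (2 ^ (n + 1))) (Fin (2 ^ (n + 1))) K)ˣ,
      (b : Matrix (Fin (2 ^ (n + 1))) (Fin (2 ^ (n + 1))) K) =
        Matrix.reindex (finProdFinEquiv.trans (finCongr (by ring)))
          (finProdFinEquiv.trans (finCongr (by ring)))
          (Matrix.blockDiagonal fun _ : Fin 2 => (a : Matrix (Fin (2 ^ n)) (Fin (2 ^ n)) K)) →
      φ (n + 1) b = φ n a)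
    (hdist : ∀ n : ℕ, ∀ a b : (Matrix (Fin (2 ^ n)) (Fin (2 ^ n)) K)ˣ,
      dist (φ n a) (φ n b) =
        ((sInf {m : ℕ | ∃ μ : Kˣ,
          ((a : Matrix (Fin (2 ^ n)) (Fin (2 ^ n)) K) -
            (μ : K) • (b : Matrix (Fin (2 ^ n)) (Fin (2 ^ n)) K)).rank = m} : ℕ) : ℝ) / 2 ^ n)
    (hdense : Dense (⋃ n : ℕ, Set.range (φ n)))
    {ι : Type*} (w : Monoid.Coprod G (FreeGroup ι)) (hw : w ≠ 1) :
    ∃ h : ι → G, Monoid.Coprod.lift (MonoidHom.id G) (FreeGroup.lift h) w ≠ 1 := by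
  have : IsIsometricSMul G G := ⟨fun f => .of_dist_eq fun a b => (hbiinv f a b).1⟩
  have : IsIsometricSMul Gᵐᵒᵖ G := ⟨fun f => .of_dist_eq fun a b => (hbiinv f.unop a b).2⟩
  have hmono : Monotone fun n => (φ n).range := monotone_range_of_blockDiagonal _ hcompat
  have hcard : Filter.Tendsto (fun n => (Fintype.card (Fin (2 ^ n)) : ℝ)) .atTop .atTop := by
    simpa using tendsto_pow_atTop_atTop_of_one_lt one_lt_two
  have hφ (n : ℕ) (a) :
      dist (φ n a) 1 = projRank a.val.mulVecLin / Fintype.card (Fin (2 ^ n)) := by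
    simpa [← sInf_rank_sub_smul_one] using hdist n a 1
  obtain ⟨c, L, hL, rfl⟩ := hasReducedForm w
  simp_rw [lift_toCoprod]
  obtain rfl | hL₀ := eq_or_ne L []
  · exact ⟨1, fun hc : c = 1 => hw (by simp [toCoprod, hc])⟩
  · exact exists_eval_ne_one hmono hdense c hL fun δ hδ =>
      exists_pos_eventually_le_dist_eval hcard hφ (by simpa using hL₀) hδ

/-- The group `A(q)/Z` — the completion of the inductive limit of the groups
`GL_{2ⁿ}(q)` under the diagonal embeddings `h ↦ diag(h, h)`, with respect to the
normalized projective rank metric, modulo its center — admits no mixed identity.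

We characterize `A(q)/Z` abstractly: a complete group `G` with a bi-invariant metric,
together with compatible homomorphisms `φ n : GL_{2ⁿ}(q) →* G` with dense combined range,
such that `dist (φ n a) (φ n b)` is the normalized projective rank distance
`min_{μ ∈ F_qˣ} rank (a - μ·b) / 2ⁿ`. The conclusion: every non-trivial word with
constants `w ∈ G ∗ F_r` has a non-trivial value. -/
theorem Aq_mod_center_mixed_identity_free
    {K : Type*} [Field K] [Fintype K]
    (G : Type*) [Group G] [MetricSpace G] [CompleteSpace G]
    (hbiinv : ∀ f a b : G, dist (f * a) (f * b) = dist a b ∧ dist (a * f) (b * f) = dist a b)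
    (φ : ∀ n : ℕ, (Matrix (Fin (2 ^ n)) (Fin (2 ^ n)) K)ˣ →* G)
    -- compatibility with the diagonal embeddings `a ↦ diag(a, a)`:
    (hcompat : ∀ n : ℕ, ∀ a : (Matrix (Fin (2 ^ n)) (Fin (2 ^ n)) K)ˣ,
      ∀ b : (Matrix (Fin (2 ^ (n + 1))) (Fin (2 ^ (n + 1))) K)ˣ,
      (b : Matrix (Fin (2 ^ (n + 1))) (Fin (2 ^ (n + 1))) K) =
        Matrix.reindex (finProdFinEquiv.trans (finCongr (by ring)))
          (finProdFinEquiv.trans (finCongr (by ring)))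
          (Matrix.blockDiagonal fun _ : Fin 2 => (a : Matrix (Fin (2 ^ n)) (Fin (2 ^ n)) K)) →
      φ (n + 1) b = φ n a)
    -- `dist` restricts to the normalized projective rank metric on each `GL_{2ⁿ}(q)`
    -- (so that each `φ n` factors through `PGL_{2ⁿ}(q)`):
    (hdist : ∀ n : ℕ, ∀ a b : (Matrix (Fin (2 ^ n)) (Fin (2 ^ n)) K)ˣ,
      dist (φ n a) (φ n b) =
        ((sInf {m : ℕ | ∃ μ : Kˣ,
          ((a : Matrix (Fin (2 ^ n)) (Fin (2 ^ n)) K) -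
            (μ : K) • (b : Matrix (Fin (2 ^ n)) (Fin (2 ^ n)) K)).rank = m} : ℕ) : ℝ) / 2 ^ n)
    -- density of the union of the images:
    (hdense : Dense (⋃ n : ℕ, Set.range (φ n))) :
    ∀ r : ℕ, ∀ w : Monoid.Coprod G (FreeGroup (Fin r)), w ≠ 1 →
      ∃ h : Fin r → G, Monoid.Coprod.lift (MonoidHom.id G) (FreeGroup.lift h) w ≠ 1 := by
  exact fun _ w hw =>
    Aq_mod_center_mixed_identity_free_general G hbiinv φ hcompat hdist hdense w hw
end
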